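/- arXiv:1811.07837 — 7 statements merged into one kernel-verified Lean document; each statement's English description precedes it below -/
import Mathlib

section
/- Let n ≥ 1 and let K : ℝ^{n+1} → ℝ be an odd Calderón–Zygmund kernel of homogeneity −n: K(x) = Ω(x)/|x|^n with Ω homogeneous of degree 0, K of class C² on ℝ^{n+1}∖{0} and |∇^j K(x)| ≤ C/|x|^{n+j} for j = 0,1,2 and x ≠ 0. Let A : ℝ^n → ℝ be a C¹ function with ‖∇A‖_∞ ≤ 1/10, let Γ = {(z, A(z)) : z ∈ ℝ^n} ⊂ ℝ^{n+1}, let μ = H^n|_Γ, and for x ∈ Γ let N_x denote a unit normal to Γ at x. Let g : ℝ^{n+1} → ℝ be a C¹ function with compact support, and fix a ∈ (0,1) and b ∈ (0,a). Then for every x ∈ Γ at which pv T(gμ)(x) exists, lim_{X_a(x,N_x) ∋ y → x} ½(T_{b|x−y|}(gμ)(y) + T_{b|x−y|}(gμ)(2x−y)) = pv T(gμ)(x). -/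
open MeasureTheory Metric Filter Set
open scoped ENNReal NNReal Topology RealInnerProductSpace

noncomputable section

/-- The one-sided open cone `X_a(x,u)` with vertex `x`, axis `u` and aperture `a`. -/
def cone {n : ℕ} (a : ℝ) (x u : EuclideanSpace ℝ (Fin (n + 1))) :
    Set (EuclideanSpace ℝ (Fin (n + 1))) :=
  {y | a * ‖y - x‖ < ⟪y - x, u⟫}

/-- The truncated singular integral of the measure `g μ`:
`T_ε(gμ)(y) = ∫_{|y-z|>ε} K(y-z) g(z) dμ(z)`. -/
def TepsDen {n : ℕ} (K : EuclideanSpace ℝ (Fin (n + 1)) → ℝ)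
    (μ : Measure (EuclideanSpace ℝ (Fin (n + 1))))
    (g : EuclideanSpace ℝ (Fin (n + 1)) → ℝ) (ε : ℝ)
    (y : EuclideanSpace ℝ (Fin (n + 1))) : ℝ :=
  ∫ z, (if ε < dist y z then K (y - z) * g z else 0) ∂μ

/-- The map `z ↦ (z, A z)` parametrizing the graph of `A : ℝⁿ → ℝ`. -/
def graphMap {n : ℕ} (A : EuclideanSpace ℝ (Fin n) → ℝ) (z : EuclideanSpace ℝ (Fin n)) :
    EuclideanSpace ℝ (Fin (n + 1)) :=
  WithLp.toLp 2 (Fin.snoc (α := fun _ => ℝ) (WithLp.ofLp z) (A z))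

/-- The constant `C_K(N)` appearing in the jump formulas: an integral over the
hyperplane through the origin orthogonal to `N`. -/
def CK (n : ℕ) (Ω : EuclideanSpace ℝ (Fin (n + 1)) → ℝ)
    (N : EuclideanSpace ℝ (Fin (n + 1))) : ℝ :=
  ∫ y in {y : EuclideanSpace ℝ (Fin (n + 1)) | ⟪y, N⟫ = 0},
    (Ω (y + N) - Ω (y - N)) / (2 * (‖y‖ ^ 2 + 1) ^ ((n : ℝ) / 2)) ∂μH[n]

lemma density_lemma {E : Type*} [NormedAddCommGroup E] [NormedSpace ℝ E] [FiniteDimensional ℝ E]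
    [MeasurableSpace E] [BorelSpace E] (lam ν : Measure E) [lam.IsAddHaarMeasure]
    (B : ℝ≥0) (hB : ∀ s, MeasurableSet s → ν s ≤ B * lam s) (z : E)
    (hσ : ∀ c : ℝ≥0, 1 < c → ∃ δ > (0:ℝ), ∀ s ⊆ ball z δ, MeasurableSet s →
      ν ((fun u => (2:ℝ) • z - u) ⁻¹' s) ≤ c * ν s) :
    ∃ h : E → ℝ≥0, Measurable h ∧ (∀ u, h u ≤ B) ∧ ν = lam.withDensity (fun u => (h u : ℝ≥0∞)) ∧
      Tendsto (fun u => (h (z + u) : ℝ) - h (z - u)) (𝓝 0) (𝓝 0) := by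
  have hνB : ν ≤ B • lam := Measure.le_iff.2 fun s hs => by simpa using hB s hs
  have : SigmaFinite ν := by
    have : IsLocallyFiniteMeasure ν := by
      refine ⟨fun x => ?_⟩
      obtain ⟨s, hs, hs'⟩ := lam.finiteAt_nhds x
      refine ⟨s, hs, (hνB s).trans_lt ?_⟩
      simpa using ENNReal.mul_lt_top ENNReal.coe_lt_top hs'
    infer_instance
  have hac : ν ≪ lam := (Measure.absolutelyContinuous_of_le hνB).trans
    (Measure.smul_absolutelyContinuous)
  set f := ν.rnDeriv lam with hf
  have hfm : Measurable f := Measure.measurable_rnDeriv _ _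
  have hνf : lam.withDensity f = ν := Measure.withDensity_rnDeriv_eq _ _ hac
  have hset : ∀ s, MeasurableSet s → ∫⁻ u in s, f u ∂lam = ν s := fun s hs => by
    rw [← withDensity_apply _ hs, hνf]
  set σ : E → E := fun u => (2:ℝ) • z - u with hσd
  have hσm : Measurable σ := by fun_prop
  have hσp : MeasurePreserving σ lam lam := Measure.measurePreserving_sub_left lam _
  have hσσ : ∀ u, σ (σ u) = u := fun u => by simp [hσd]
  have h1 : ∀ᵐ u ∂lam, f u ≤ B := by
    refine ae_le_of_forall_setLIntegral_le_of_sigmaFinite hfm fun s hs _ => ?_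
    rw [hset s hs]; simpa using hB s hs
  have h2 : ∀ c : ℝ≥0, 1 < c → ∃ δ > (0:ℝ), ∀ᵐ u ∂lam, u ∈ ball z δ → f (σ u) ≤ c * f u := by
    intro c hc
    obtain ⟨δ, hδ, H⟩ := hσ c hc
    refine ⟨δ, hδ, ?_⟩
    rw [← ae_restrict_iff' measurableSet_ball]
    refine ae_le_of_forall_setLIntegral_le_of_sigmaFinite (hfm.comp hσm) fun s hs _ => ?_
    rw [Measure.restrict_restrict hs, lintegral_const_mul _ hfm,
      hset _ (hs.inter measurableSet_ball)]
    refine le_trans (le_of_eq ?_) (H _ inter_subset_right (hs.inter measurableSet_ball))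
    rw [← hset _ (hσm (hs.inter measurableSet_ball))]
    have := hσp.setLIntegral_comp_preimage
      (hσm (hs.inter (measurableSet_ball : MeasurableSet (ball z δ)))) hfm
    rw [← this, ← preimage_comp]
    have e : σ ∘ σ = id := funext hσσ
    rw [e, preimage_id]
  have hk : ∀ k : ℕ, (1:ℝ≥0) < 1 + 1 / (k + 1) := fun k => by
    have : (0:ℝ≥0) < 1 / (k+1) := by positivity
    exact lt_add_of_pos_right _ this
  choose δ hδ Hδ using fun k : ℕ => h2 _ (hk k)
  have hP : ∀ᵐ u ∂lam, f u ≤ B ∧ ∀ k, u ∈ ball z (δ k) → f (σ u) ≤ ((1 + 1 / (k + 1) : ℝ≥0) : ℝ≥0∞) * f u :=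
    h1.and (ae_all_iff.2 Hδ)
  obtain ⟨M, hM, hMm, hM0⟩ := exists_measurable_superset_of_null (ae_iff.1 hP)
  have hM0' : lam (σ ⁻¹' M) = 0 := by rw [hσp.measure_preimage hMm.nullMeasurableSet, hM0]
  set Q := M ∪ σ ⁻¹' M with hQ
  have hQm : MeasurableSet Q := hMm.union (hσm hMm)
  have hQ0 : lam Q = 0 := measure_union_null hM0 hM0'
  have hQσ : ∀ u, σ u ∈ Q ↔ u ∈ Q := fun u => by
    simp only [hQ, mem_union, mem_preimage, hσσ]; exact or_comm
  have hgood : ∀ u, u ∉ Q → f u ≤ B ∧ ∀ k, u ∈ ball z (δ k) → f (σ u) ≤ ((1 + 1 / (k + 1) : ℝ≥0) : ℝ≥0∞) * f u := by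
    intro u hu
    by_contra hc
    exact hu (Or.inl (hM hc))
  set h : E → ℝ≥0 := Qᶜ.indicator (fun u => (f u).toNNReal) with hh
  have hhm : Measurable h := (hfm.ennreal_toNNReal).indicator hQm.compl
  have hhQ : ∀ u ∈ Q, h u = 0 := fun u hu => by simp [hh, hu]
  have hhQ' : ∀ u, u ∉ Q → (h u : ℝ≥0∞) = f u := fun u hu => by
    have : h u = (f u).toNNReal := by simp [hh, hu]
    rw [this, ENNReal.coe_toNNReal]
    exact ((hgood u hu).1.trans_lt ENNReal.coe_lt_top).ne
  have hhB : ∀ u, h u ≤ B := by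
    intro u
    by_cases hu : u ∈ Q
    · simp [hhQ u hu]
    · have := (hgood u hu).1
      rw [← hhQ' u hu] at this
      exact_mod_cast this
  have hhσ : ∀ u k, u ∈ ball z (δ k) → (h (σ u) : ℝ) - h u ≤ B * (1 / ((k:ℝ) + 1)) := by
    intro u k huk
    by_cases hu : u ∈ Q
    · simp only [hhQ u hu, hhQ _ ((hQσ u).2 hu)]
      simp; positivity
    · have := (hgood u hu).2 k huk
      rw [← hhQ' u hu, ← hhQ' _ (fun h => hu ((hQσ u).1 h))] at this
      have h3 : h (σ u) ≤ (1 + 1 / (k + 1)) * h u := by exact_mod_cast this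
      have h4 : (h (σ u) : ℝ) ≤ (1 + 1 / (k + 1)) * h u := by exact_mod_cast h3
      have h5 : (h u : ℝ) ≤ B := by exact_mod_cast hhB u
      have : (1 / ((k:ℝ) + 1)) * h u ≤ (1 / ((k:ℝ) + 1)) * B := by gcongr
      linarith
  refine ⟨h, hhm, hhB, ?_, ?_⟩
  · rw [← hνf]
    refine withDensity_congr_ae ?_
    have : ∀ᵐ u ∂lam, u ∉ Q := measure_eq_zero_iff_ae_notMem.1 hQ0
    filter_upwards [this] with u hu
    exact (hhQ' u hu).symm
  · rw [Metric.tendsto_nhds_nhds]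
    intro ε hε
    obtain ⟨k, hk⟩ := exists_nat_gt ((B:ℝ) / ε)
    refine ⟨δ k, hδ k, fun {u} hu => ?_⟩
    have hk1 : (B:ℝ) * (1 / ((k:ℝ) + 1)) < ε := by
      have : (0:ℝ) < k + 1 := by positivity
      rw [mul_one_div, div_lt_iff₀ this]
      rw [div_lt_iff₀ hε] at hk
      nlinarith
    have e1 : σ (z - u) = z + u := by simp only [hσd, two_smul]; abel
    have e2 : σ (z + u) = z - u := by simp only [hσd, two_smul]; abel
    have a1 := hhσ (z - u) k (by simpa [mem_ball, dist_eq_norm] using hu)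
    have a2 := hhσ (z + u) k (by simpa [mem_ball, dist_eq_norm] using hu)
    rw [e1] at a1; rw [e2] at a2
    rw [Real.dist_eq, abs_lt]; constructor <;> linarith

section graph
variable {n : ℕ} (A : EuclideanSpace ℝ (Fin n) → ℝ)

lemma graphMap_dist_sq (u v : EuclideanSpace ℝ (Fin n)) :
    ‖graphMap A u - graphMap A v‖ ^ 2 = ‖u - v‖ ^ 2 + (A u - A v) ^ 2 := by
  rw [EuclideanSpace.norm_sq_eq, EuclideanSpace.norm_sq_eq, Fin.sum_univ_castSucc]
  simp [graphMap]

lemma graphMap_anti (u v : EuclideanSpace ℝ (Fin n)) :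
    ‖u - v‖ ≤ ‖graphMap A u - graphMap A v‖ := by
  refine le_of_sq_le_sq ?_ (norm_nonneg _) 
  rw [graphMap_dist_sq]; nlinarith [sq_nonneg (A u - A v)]

variable {A}

lemma graphMap_contDiff (hA : ContDiff ℝ 1 A) : ContDiff ℝ 1 (graphMap A) := by
  rw [contDiff_euclidean]
  intro i
  refine Fin.lastCases ?_ (fun j => ?_) i
  · simpa [graphMap] using hA
  · simp only [graphMap, Fin.snoc_castSucc]
    fun_prop

lemma graphMap_lip (hA : ContDiff ℝ 1 A) (hslope : ∀ z, ‖gradient A z‖ ≤ 1 / 10) :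
    LipschitzWith 2 (graphMap A) := by
  have hAd : Differentiable ℝ A := hA.differentiable one_ne_zero
  have hl : ∀ u v, ‖A u - A v‖ ≤ 1 / 10 * ‖u - v‖ := by
    intro u v
    refine (convex_univ).norm_image_sub_le_of_norm_fderiv_le (𝕜 := ℝ) (fun x _ => hAd x)
      (fun x _ => ?_) (mem_univ _) (mem_univ _)
    have := hslope x
    rwa [gradient, LinearIsometryEquiv.norm_map] at this
  refine LipschitzWith.of_dist_le_mul fun u v => ?_
  rw [dist_eq_norm, dist_eq_norm]
  refine le_of_sq_le_sq ?_ (by positivity) 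
  rw [graphMap_dist_sq]
  have h1 := hl u v
  rw [Real.norm_eq_abs] at h1
  have h2 := sq_le_sq' (by linarith [abs_nonneg (A u - A v), norm_nonneg (u-v)]) h1
  rw [sq_abs] at h2
  push_cast
  nlinarith [sq_nonneg ‖u-v‖]

lemma graphMap_closedEmb (hA : ContDiff ℝ 1 A) (hslope : ∀ z, ‖gradient A z‖ ≤ 1 / 10) :
    Topology.IsClosedEmbedding (graphMap A) := by
  refine AntilipschitzWith.isClosedEmbedding (K := 1) ?_ (graphMap_lip hA hslope).uniformContinuous
  refine AntilipschitzWith.of_le_mul_dist fun u v => ?_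
  rw [dist_eq_norm, dist_eq_norm]
  simpa using graphMap_anti A u v

lemma graphMap_reflect (hn : 1 ≤ n) (hA : ContDiff ℝ 1 A) (z : EuclideanSpace ℝ (Fin n))
    (c : ℝ≥0) (hc : 1 < c) : ∃ δ > (0:ℝ), ∀ s ⊆ ball z δ,
      (μH[n] : Measure (EuclideanSpace ℝ (Fin (n+1))))
        (graphMap A '' ((fun u => (2:ℝ) • z - u) ⁻¹' s)) ≤ c * μH[n] (graphMap A '' s) := by
  set G := graphMap A with hG
  set σ : EuclideanSpace ℝ (Fin n) → EuclideanSpace ℝ (Fin n) := fun u => (2:ℝ) • z - u with hσ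
  have hσσ : ∀ u, σ (σ u) = u := fun u => by simp [hσ]
  have hn0 : (0:ℝ) < n := by exact_mod_cast hn
  set k : ℝ≥0 := c ^ ((n:ℝ)⁻¹) with hk
  have hk1 : 1 < k := NNReal.one_lt_rpow hc (by positivity)
  have hkn : (k : ℝ≥0∞) ^ (n:ℝ) = c := by
    rw [← ENNReal.coe_rpow_of_nonneg _ hn0.le, hk, ← NNReal.rpow_mul, inv_mul_cancel₀ hn0.ne',
      NNReal.rpow_one]
  have hs : HasStrictFDerivAt G (fderiv ℝ G z) z :=
    (graphMap_contDiff hA).contDiffAt.hasStrictFDerivAt one_ne_zero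
  set η : ℝ≥0 := (k - 1) / 2 with hη
  have hk1' : (1:ℝ) < k := by exact_mod_cast hk1
  have hη' : (η : ℝ) = (k - 1) / 2 := by
    rw [hη]; push_cast [NNReal.coe_sub hk1.le]; rfl
  have hη0 : 0 < η := by
    have : (0:ℝ) < η := by rw [hη']; linarith
    exact_mod_cast this
  obtain ⟨t, ht, hapx⟩ := hs.approximates_deriv_on_nhds (Or.inr hη0)
  obtain ⟨δ, hδ, hδt⟩ := Metric.mem_nhds_iff.1 ht
  refine ⟨δ, hδ, fun s hsδ => ?_⟩
  have hinj : Function.Injective G := fun u v huv => by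
    have := graphMap_anti A u v
    rw [← hG, huv, sub_self, norm_zero] at this
    exact sub_eq_zero.1 (norm_le_zero_iff.1 this)
  have hbσ : ∀ u ∈ ball z δ, σ u ∈ ball z δ := fun u hu => by
    rw [mem_ball, dist_eq_norm] at hu ⊢
    have e : σ u - z = -(u - z) := by simp only [hσ, two_smul]; abel
    rw [e, norm_neg]
    exact hu
  have hinv : ∀ u, Function.invFun G (G u) = u := Function.leftInverse_invFun hinj
  have hlip : LipschitzOnWith k (fun p => G (σ (Function.invFun G p))) (G '' s) := by
    refine LipschitzOnWith.of_dist_le_mul ?_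
    rintro _ ⟨u, hu, rfl⟩ _ ⟨v, hv, rfl⟩
    simp only [hinv]
    rw [dist_eq_norm, dist_eq_norm]
    have a1 := hapx u (hδt (hsδ hu)) v (hδt (hsδ hv))
    have a2 := hapx _ (hδt (hbσ u (hsδ hu))) _ (hδt (hbσ v (hsδ hv)))
    have e : σ u - σ v = -(u - v) := by simp only [hσ]; abel
    rw [e, map_neg, norm_neg, sub_neg_eq_add] at a2
    have a3 := graphMap_anti A u v
    rw [← hG] at a3
    have e2 : G (σ u) - G (σ v) = (G (σ u) - G (σ v) + (fderiv ℝ G z) (u - v)) +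
        (G u - G v - (fderiv ℝ G z) (u - v)) - (G u - G v) := by abel
    have a4 : ‖G (σ u) - G (σ v)‖ ≤ η * ‖u - v‖ + η * ‖u - v‖ + ‖G u - G v‖ := by
      rw [e2]
      refine (norm_sub_le _ _).trans ?_
      gcongr
      exact (norm_add_le _ _).trans (add_le_add a2 a1)
    rw [hη'] at a4
    nlinarith
  have := hlip.hausdorffMeasure_image_le hn0.le
  rw [hkn] at this
  refine le_trans (le_of_eq ?_) this
  congr 1
  ext p
  constructor
  · rintro ⟨u, hu, rfl⟩
    exact ⟨G (σ u), ⟨_, hu, rfl⟩, by simp only [hinv, hσσ]⟩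
  · rintro ⟨_, ⟨u, hu, rfl⟩, rfl⟩
    exact ⟨σ u, by rw [mem_preimage, hσσ]; exact hu, by simp only [hinv]⟩

lemma graph_density (hn : 1 ≤ n) (hA : ContDiff ℝ 1 A) (hslope : ∀ z, ‖gradient A z‖ ≤ 1 / 10)
    (lam : Measure (EuclideanSpace ℝ (Fin n))) [lam.IsAddHaarMeasure] (hlam : lam = μH[n])
    (z : EuclideanSpace ℝ (Fin n)) :
    ∃ (h : EuclideanSpace ℝ (Fin n) → ℝ≥0) (B : ℝ≥0), Measurable h ∧ (∀ u, h u ≤ B) ∧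
      Tendsto (fun u => (h (z + u) : ℝ) - h (z - u)) (𝓝 0) (𝓝 0) ∧
      ∀ f : EuclideanSpace ℝ (Fin (n+1)) → ℝ,
        ∫ p, f p ∂((μH[n] : Measure (EuclideanSpace ℝ (Fin (n+1)))).restrict
          (Set.range (graphMap A))) = ∫ u, h u * f (graphMap A u) ∂lam := by
  have hemb : MeasurableEmbedding (graphMap A) := (graphMap_closedEmb hA hslope).measurableEmbedding
  set ν := Measure.comap (graphMap A) (μH[n] : Measure (EuclideanSpace ℝ (Fin (n+1)))) with hν
  have hνa : ∀ s, ν s = μH[n] (graphMap A '' s) := fun s => hemb.comap_apply _ _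
  obtain ⟨h, hm, hB, hd, ht⟩ := density_lemma lam ν (2 ^ n) (fun s _ => by
      rw [hνa, hlam]
      have := (graphMap_lip hA hslope).hausdorffMeasure_image_le (d := n) (by positivity) s
      simpa using this) z (fun c hc => by
      obtain ⟨δ, hδ, H⟩ := graphMap_reflect hn hA z c hc
      exact ⟨δ, hδ, fun s hs _ => by rw [hνa, hνa]; exact H s hs⟩)
  refine ⟨h, 2 ^ n, hm, hB, ht, fun f => ?_⟩
  rw [← hemb.map_comap, hemb.integral_map, ← hν, hd, integral_withDensity_eq_integral_smul hm]
  rfl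
end graph

/-- the difference kernel -/
def Phi {E : Type*} [NormedAddCommGroup E] (K : E → ℝ) (b : ℝ) (ω q : E) : ℝ :=
  ((if b < ‖ω - q‖ then K (ω - q) else 0) + (if b < ‖-ω - q‖ then K (-ω - q) else 0)) / 2
    - (if 1 < ‖q‖ then K (-q) else 0)

section kernel
variable {E : Type*} [NormedAddCommGroup E] [NormedSpace ℝ E] {K : E → ℝ} {C : ℝ} {n : ℕ}

lemma Phi_odd (hKodd : ∀ x, K (-x) = -K x) (b : ℝ) (ω q : E) :
    Phi K b ω (-q) = - Phi K b ω q := by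
  have e1 : ω - -q = -(-ω - q) := by abel
  have e2 : -ω - -q = -(ω - q) := by abel
  unfold Phi
  rw [e1, e2]
  simp only [norm_neg, hKodd]
  split_ifs <;> ring

lemma K_bd (hKbound : ∀ j ≤ 2, ∀ x : E, x ≠ 0 →
      ‖iteratedFDerivWithin ℝ j K {(0 : E)}ᶜ x‖ ≤ C / ‖x‖ ^ (n + j)) (x : E) (hx : x ≠ 0) :
    |K x| ≤ C / ‖x‖ ^ n := by
  simpa using hKbound 0 (by norm_num) x hx

lemma K_mvt (hC : 0 ≤ C) (hKsmooth : ContDiffOn ℝ 2 K {(0 : E)}ᶜ)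
    (hKbound : ∀ j ≤ 2, ∀ x : E, x ≠ 0 →
      ‖iteratedFDerivWithin ℝ j K {(0 : E)}ᶜ x‖ ≤ C / ‖x‖ ^ (n + j))
    (c : ℝ) (hc : 0 < c) (p q : E) (h : c + ‖q - p‖ ≤ ‖p‖) :
    |K q - K p| ≤ C / c ^ (n + 1) * ‖q - p‖ := by
  have hopen : IsOpen ({(0 : E)}ᶜ : Set E) := isOpen_compl_singleton
  have hnorm : ∀ y ∈ closedBall p ‖q - p‖, c ≤ ‖y‖ := by
    intro y hy
    rw [mem_closedBall, dist_eq_norm] at hy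
    have := norm_sub_norm_le p y
    rw [norm_sub_rev] at this
    linarith
  have hne : ∀ y ∈ closedBall p ‖q - p‖, y ≠ 0 := by
    intro y hy h0
    have := hnorm y hy
    rw [h0, norm_zero] at this
    linarith
  refine (convex_closedBall p ‖q - p‖).norm_image_sub_le_of_norm_fderiv_le (𝕜 := ℝ) (f := K)
    (fun y hy => ?_) (fun y hy => ?_) (mem_closedBall_self (norm_nonneg _)) ?_
  · exact (hKsmooth.contDiffAt (hopen.mem_nhds (hne y hy))).differentiableAt two_ne_zero
  · have h1 := hKbound 1 (by norm_num) y (hne y hy)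
    rw [norm_iteratedFDerivWithin_one _ (hopen.uniqueDiffWithinAt (hne y hy)),
      fderivWithin_of_isOpen hopen (hne y hy)] at h1
    refine h1.trans ?_
    have := hnorm y hy
    gcongr
  · simp [dist_eq_norm]

lemma K_meas [MeasurableSpace E] [BorelSpace E] (hKsmooth : ContDiffOn ℝ 2 K {(0 : E)}ᶜ) :
    Measurable K := by
  have h := hKsmooth.continuousOn
  refine measurable_of_continuousOn_compl_singleton 0 h

lemma Phi_meas [MeasurableSpace E] [BorelSpace E] (hK : Measurable K) (b : ℝ) (ω : E) :
    Measurable (Phi K b ω) := by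
  unfold Phi
  refine Measurable.sub (Measurable.div_const (Measurable.add ?_ ?_) _) ?_
  all_goals
    refine Measurable.ite (measurableSet_lt (by fun_prop) ?_) (hK.comp ?_) measurable_const
  all_goals fun_prop

lemma Phi_bound (hC : 0 ≤ C) (hKsmooth : ContDiffOn ℝ 2 K {(0 : E)}ᶜ)
    (hKbound : ∀ j ≤ 2, ∀ x : E, x ≠ 0 →
      ‖iteratedFDerivWithin ℝ j K {(0 : E)}ᶜ x‖ ≤ C / ‖x‖ ^ (n + j))
    (b : ℝ) (hb : 0 < b) (hb1 : b < 1) (ω q : E) (hω : ‖ω‖ = 1) :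
    |Phi K b ω q| ≤ (C / b ^ n + C) * 3 ^ (n + 1) / (1 + ‖q‖) ^ (n + 1) := by
  have htr : ∀ (c : ℝ) (p : E), 0 < c → |if c < ‖p‖ then K p else 0| ≤ C / c ^ n := by
    intro c p hc
    split_ifs with h
    · refine (K_bd hKbound p (norm_pos_iff.1 (hc.trans h))).trans ?_
      gcongr
    · simp; positivity
  rcases le_or_gt ‖q‖ 2 with hq | hq
  · have h1 : |Phi K b ω q| ≤ C / b ^ n + C := by
      have a1 := htr b (ω - q) hb
      have a2 := htr b (-ω - q) hb
      have a3 := htr 1 (-q) one_pos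
      rw [norm_neg] at a3
      simp only [one_pow, div_one] at a3
      unfold Phi
      rw [abs_le] at a1 a2 a3 ⊢
      constructor <;> linarith [a1.1, a2.1, a3.1, a1.2, a2.2, a3.2]
    rw [le_div_iff₀ (by positivity)]
    have : (1 + ‖q‖) ^ (n + 1) ≤ 3 ^ (n + 1) := by
      gcongr; linarith
    gcongr
  · have n1 : b < ‖ω - q‖ := by
      have := norm_sub_norm_le q ω
      rw [norm_sub_rev] at this; linarith
    have n2 : b < ‖-ω - q‖ := by
      have := norm_sub_norm_le q (-ω)
      rw [norm_sub_rev, norm_neg] at this; linarith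
    have m1 := K_mvt hC hKsmooth hKbound (‖q‖ - 1) (by linarith) (-q) (ω - q)
      (by rw [norm_neg, show ω - q - -q = ω by abel, hω]; linarith)
    have m2 := K_mvt hC hKsmooth hKbound (‖q‖ - 1) (by linarith) (-q) (-ω - q)
      (by rw [norm_neg, show -ω - q - -q = -ω by abel, norm_neg, hω]; linarith)
    rw [show ω - q - -q = ω by abel, hω, mul_one] at m1
    rw [show -ω - q - -q = -ω by abel, norm_neg, hω, mul_one] at m2
    have h1 : |Phi K b ω q| ≤ C / (‖q‖ - 1) ^ (n + 1) := by
      unfold Phi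
      rw [if_pos n1, if_pos n2, if_pos (by linarith)]
      rw [abs_le] at m1 m2 ⊢
      constructor <;> linarith [m1.1, m1.2, m2.1, m2.2]
    refine h1.trans ?_
    have hq1 : 0 < ‖q‖ - 1 := by linarith
    rw [div_le_div_iff₀ (by positivity) (by positivity), mul_assoc, ← mul_pow]
    have : (1 + ‖q‖) ^ (n + 1) ≤ (3 * (‖q‖ - 1)) ^ (n + 1) := by
      gcongr; linarith
    have hb' : 0 ≤ C / b ^ n := by positivity
    gcongr
    linarith

lemma Phi_conv (hC : 0 ≤ C) (hKsmooth : ContDiffOn ℝ 2 K {(0 : E)}ᶜ)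
    (hKbound : ∀ j ≤ 2, ∀ x : E, x ≠ 0 →
      ‖iteratedFDerivWithin ℝ j K {(0 : E)}ᶜ x‖ ≤ C / ‖x‖ ^ (n + j))
    {ι : Type*} {l : Filter ι} (a b : ℝ) (hb : 0 < b) (hba : b < a) (ω q : ι → E) (q0 : E)
    (hq0 : ‖q0‖ ≠ 1) (h1 : ∀ᶠ i in l, a ≤ ‖ω i - q0‖) (h2 : ∀ᶠ i in l, a ≤ ‖-ω i - q0‖)
    (hq : Tendsto q l (𝓝 q0)) :
    Tendsto (fun i => Phi K b (ω i) (q i) - Phi K b (ω i) q0) l (𝓝 0) := by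
  have hd : Tendsto (fun i => ‖q i - q0‖) l (𝓝 0) := by
    simpa using (hq.sub_const q0).norm
  have key : ∀ η : ι → E, (∀ᶠ i in l, a ≤ ‖η i - q0‖) → Tendsto (fun i =>
      (if b < ‖η i - q i‖ then K (η i - q i) else 0) - 
      (if b < ‖η i - q0‖ then K (η i - q0) else 0)) l (𝓝 0) := by
    intro η hη
    have hlim : Tendsto (fun i => C / b ^ (n + 1) * ‖q i - q0‖) l (𝓝 0) := by
      simpa using hd.const_mul (C / b ^ (n + 1))
    refine squeeze_zero_norm' ?_ hlim
    have hsm : ∀ᶠ i in l, ‖q i - q0‖ < a - b := hd.eventually (gt_mem_nhds (by linarith))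
    filter_upwards [hη, hsm] with i hi hs
    have e : (η i - q i) - (η i - q0) = -(q i - q0) := by abel
    have hn1 : b < ‖η i - q i‖ := by
      have := norm_sub_norm_le (η i - q0) (η i - q i)
      rw [norm_sub_rev (η i - q0), e, norm_neg] at this
      linarith
    rw [if_pos hn1, if_pos (by linarith)]
    have := K_mvt hC hKsmooth hKbound b hb (η i - q0) (η i - q i)
      (by rw [e, norm_neg]; linarith)
    rwa [e, norm_neg] at this
  have k1 := key ω h1
  have k2 := key (fun i => -ω i) h2
  have k3 : Tendsto (fun i => (if 1 < ‖q i‖ then K (-q i) else 0) -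
      (if 1 < ‖q0‖ then K (-q0) else 0)) l (𝓝 0) := by
    rcases lt_or_gt_of_ne hq0 with h | h
    · have : ∀ᶠ i in l, ‖q i‖ < 1 := hq.norm.eventually (gt_mem_nhds h)
      refine tendsto_const_nhds.congr' ?_
      filter_upwards [this] with i hi
      rw [if_neg hi.not_gt, if_neg h.not_gt, sub_zero]
    · have : ∀ᶠ i in l, 1 < ‖q i‖ := hq.norm.eventually (lt_mem_nhds h)
      have hne : -q0 ≠ 0 := by
        intro h0; rw [neg_eq_zero] at h0; rw [h0, norm_zero] at h; linarith
      have hc : ContinuousAt K (-q0) :=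
        hKsmooth.continuousOn.continuousAt (isOpen_compl_singleton.mem_nhds hne)
      have hc2 : Tendsto (fun i => K (-q i) - K (-q0)) l (𝓝 0) := by
        simpa using (hc.tendsto.comp hq.neg).sub_const (K (-q0))
      refine hc2.congr' ?_
      filter_upwards [this] with i hi
      rw [if_pos hi, if_pos h]
  have := ((k1.add k2).div_const 2).sub k3
  simp only [add_zero, zero_div, sub_zero] at this
  refine this.congr fun i => ?_
  unfold Phi
  ring
end kernel

lemma null_sphere {E F : Type*} [NormedAddCommGroup E] [NormedSpace ℝ E] [FiniteDimensional ℝ E]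
    [MeasurableSpace E] [BorelSpace E] [NormedAddCommGroup F] [NormedSpace ℝ F]
    (lam : Measure E) [lam.IsAddHaarMeasure] (L : E →L[ℝ] F) : lam {v | ‖L v‖ = 1} = 0 := by
  have hconv : Convex ℝ {v | ‖L v‖ ≤ 1} := by
    have : {v | ‖L v‖ ≤ 1} = L ⁻¹' (closedBall 0 1) := by ext v; simp
    rw [this]
    exact (convex_closedBall 0 1).linear_preimage (L : E →ₗ[ℝ] F)
  refine measure_mono_null ?_ (hconv.addHaar_frontier lam)
  intro v hv
  have hv : ‖L v‖ = 1 := hv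
  rw [frontier_eq_closure_inter_closure]
  refine ⟨subset_closure hv.le, ?_⟩
  have ht : Tendsto (fun t : ℝ => t • v) (𝓝[>] 1) (𝓝 v) := by
    have : Tendsto (fun t : ℝ => t • v) (𝓝 1) (𝓝 ((1:ℝ) • v)) :=
      (continuous_id.smul continuous_const).tendsto 1
    rw [one_smul] at this
    exact this.mono_left nhdsWithin_le_nhds
  refine mem_closure_of_tendsto ht ?_
  filter_upwards [self_mem_nhdsWithin] with t ht
  have ht : 1 < t := ht
  simp only [mem_compl_iff, mem_ofPred_eq, map_smul, norm_smul, hv, mul_one, Real.norm_eq_abs, not_le]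
  exact lt_of_lt_of_le ht (le_abs_self t)

lemma integrable_decay {E : Type*} [NormedAddCommGroup E] [NormedSpace ℝ E] [FiniteDimensional ℝ E]
    [MeasurableSpace E] [BorelSpace E] (lam : Measure E) [lam.IsAddHaarMeasure] (n : ℕ)
    (hn : Module.finrank ℝ E = n) (D : ℝ) :
    Integrable (fun v : E => D / (1 + ‖v‖) ^ (n + 1)) lam := by
  have := (integrable_one_add_norm (μ := lam) (E := E) (r := ((n + 1 : ℕ) : ℝ))
    (by rw [hn]; push_cast; linarith)).const_mul D
  refine this.congr (Eventually.of_forall fun v => ?_)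
  have : 0 ≤ 1 + ‖v‖ := by positivity
  simp only [Real.rpow_neg this, Real.rpow_natCast, div_eq_mul_inv]

lemma integral_scale {E : Type*} [NormedAddCommGroup E] [NormedSpace ℝ E] [FiniteDimensional ℝ E]
    [MeasurableSpace E] [BorelSpace E] (lam : Measure E) [lam.IsAddHaarMeasure] (n : ℕ)
    (hn : Module.finrank ℝ E = n) (F : E → ℝ) (z : E) (r : ℝ) (hr : 0 < r) :
    ∫ u, F u ∂lam = ∫ v, F (z + r • v) * r ^ n ∂lam := by
  rw [integral_mul_const, Measure.integral_comp_smul_of_nonneg lam (fun u => F (z + u)) r (hR := hr.le),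
    integral_add_left_eq_self, hn, smul_eq_mul]
  field_simp

lemma trunc_scale {E : Type*} [NormedAddCommGroup E] [NormedSpace ℝ E] {K : E → ℝ} {n : ℕ}
    (hhom : ∀ (r : ℝ) (p : E), 0 < r → K (r • p) = K p / r ^ n) (c r gv : ℝ) (hr : 0 < r)
    (y w p : E) (h : y - w = r • p) :
    (if c * r < dist y w then K (y - w) * gv else 0) * r ^ n =
      (if c < ‖p‖ then K p else 0) * gv := by
  rw [dist_eq_norm, h, norm_smul, Real.norm_of_nonneg hr.le, mul_comm c, hhom r p hr]
  simp only [mul_lt_mul_iff_right₀ hr]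
  split_ifs
  · field_simp
  · simp

theorem graph_nontangential_half_sum
    (n : ℕ) (hn : 1 ≤ n)
    (K Ω : EuclideanSpace ℝ (Fin (n + 1)) → ℝ) (C : ℝ)
    (hΩhom : ∀ x : EuclideanSpace ℝ (Fin (n + 1)), x ≠ 0 → ∀ t : ℝ, 0 < t → Ω (t • x) = Ω x)
    (hKform : ∀ x : EuclideanSpace ℝ (Fin (n + 1)), x ≠ 0 → K x = Ω x / ‖x‖ ^ n)
    (hKodd : ∀ x : EuclideanSpace ℝ (Fin (n + 1)), K (-x) = -K x)
    (hKsmooth : ContDiffOn ℝ 2 K {(0 : EuclideanSpace ℝ (Fin (n + 1)))}ᶜ)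
    (hKbound : ∀ j ≤ 2, ∀ x : EuclideanSpace ℝ (Fin (n + 1)), x ≠ 0 →
      ‖iteratedFDerivWithin ℝ j K {(0 : EuclideanSpace ℝ (Fin (n + 1)))}ᶜ x‖ ≤ C / ‖x‖ ^ (n + j))
    (A : EuclideanSpace ℝ (Fin n) → ℝ) (hA : ContDiff ℝ 1 A)
    (hslope : ∀ z, ‖gradient A z‖ ≤ 1 / 10)
    (Γ : Set (EuclideanSpace ℝ (Fin (n + 1)))) (hΓ : Γ = Set.range (graphMap A))
    (μ : Measure (EuclideanSpace ℝ (Fin (n + 1)))) (hμ : μ = μH[n].restrict Γ)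
    (N : EuclideanSpace ℝ (Fin n) → EuclideanSpace ℝ (Fin (n + 1)))
    (hN : ∀ z, ‖N z‖ = 1 ∧
      ∀ v : EuclideanSpace ℝ (Fin n), ⟪fderiv ℝ (graphMap A) z v, N z⟫ = 0)
    (g : EuclideanSpace ℝ (Fin (n + 1)) → ℝ) (hg : ContDiff ℝ 1 g)
    (hgc : HasCompactSupport g)
    (a b : ℝ) (ha : a ∈ Set.Ioo (0 : ℝ) 1) (hb : b ∈ Set.Ioo 0 a)
    (z : EuclideanSpace ℝ (Fin n)) (x : EuclideanSpace ℝ (Fin (n + 1)))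
    (hx : x = graphMap A z)
    (p : ℝ) (hpv : Tendsto (fun ε => TepsDen K μ g ε x) (𝓝[>] (0 : ℝ)) (𝓝 p)) :
    Tendsto (fun y =>
        (TepsDen K μ g (b * dist x y) y + TepsDen K μ g (b * dist x y) ((2 : ℝ) • x - y)) / 2)
      (𝓝[cone a x (N z)] x) (𝓝 p) := by
  subst hμ hΓ
  obtain ⟨ha0, ha1⟩ := ha
  obtain ⟨hb0, hba⟩ := hb
  have hfr : Module.finrank ℝ (EuclideanSpace ℝ (Fin n)) = n := by simp
  obtain ⟨lam, hlam⟩ : ∃ lam : Measure (EuclideanSpace ℝ (Fin n)), lam = μH[n] := ⟨_, rfl⟩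
  have hHaar : lam.IsAddHaarMeasure := by
    have := isAddHaarMeasure_hausdorffMeasure (E := EuclideanSpace ℝ (Fin n))
    rw [hfr] at this
    rw [hlam]; exact this
  obtain ⟨h, B, hm, hhB, hsym, hint⟩ := graph_density hn hA hslope lam hlam z
  have hGe := graphMap_closedEmb hA hslope
  have hGc := graphMap_contDiff hA
  have hGanti := graphMap_anti A
  set G := graphMap A with hG
  set L := fderiv ℝ G z with hL
  have hGcont : Continuous G := hGc.continuous
  have hGd : HasFDerivAt G L z := (hGc.differentiable one_ne_zero z).hasFDerivAt
  have hC : 0 ≤ C := by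
    obtain ⟨e, he⟩ := exists_ne (0 : EuclideanSpace ℝ (Fin (n+1)))
    have h1 := (abs_nonneg _).trans (K_bd hKbound e he)
    have h2 : 0 < ‖e‖ ^ n := by positivity
    have h3 := mul_nonneg h1 h2.le
    rwa [div_mul_cancel₀ _ h2.ne'] at h3
  have hK0 : K 0 = 0 := by
    have := hKodd 0
    rw [neg_zero] at this; linarith
  have hhom : ∀ (r : ℝ) (p : EuclideanSpace ℝ (Fin (n+1))), 0 < r → K (r • p) = K p / r ^ n := by
    intro r p hr
    by_cases hp : p = 0
    · simp [hp, hK0]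
    · rw [hKform p hp, hKform _ (smul_ne_zero hr.ne' hp), hΩhom p hp r hr, norm_smul,
        Real.norm_of_nonneg hr.le, mul_pow, div_div, mul_comm]
  have hKm : Measurable K := K_meas hKsmooth
  obtain ⟨Mg, hMg⟩ := hgc.exists_bound_of_continuous hg.continuous
  have hMg0 : 0 ≤ Mg := (norm_nonneg _).trans (hMg 0)
  have hxG : x = G z := hx
  have hB : ∀ u, |(h u : ℝ)| ≤ B := fun u => by
    rw [abs_of_nonneg (NNReal.coe_nonneg (h u))]; exact_mod_cast hhB u
  have hhm : Measurable (fun u => (h u : ℝ)) := hm.coe_nnreal_real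
  -- integral formula
  have hT : ∀ ε y, TepsDen K ((μH[n]).restrict (range G)) g ε y =
      ∫ u, h u * (if ε < dist y (G u) then K (y - G u) * g (G u) else 0) ∂lam :=
    fun ε y => hint _
  have hgG : Integrable (fun u => g (G u)) lam :=
    (hg.continuous.comp hGcont).integrable_of_hasCompactSupport (hgc.comp_isClosedEmbedding hGe)
  have hTi : ∀ ε y, 0 < ε → Integrable
      (fun u => h u * (if ε < dist y (G u) then K (y - G u) * g (G u) else 0)) lam := by
    intro ε y hε
    have h1 : Integrable (fun u => (h u * (if ε < dist y (G u) then K (y - G u) else 0))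
        * g (G u)) lam := by
      refine hgG.bdd_mul (c := B * (C / ε ^ n)) ?_ (Eventually.of_forall fun u => ?_)
      · refine (hhm.mul (Measurable.ite (measurableSet_lt (by fun_prop) ?_)
          (hKm.comp ?_) measurable_const)).aestronglyMeasurable
        · exact (continuous_const.dist hGcont).measurable
        · exact (continuous_const.sub hGcont).measurable
      · rw [norm_mul]
        refine mul_le_mul (hB u) ?_ (norm_nonneg _) B.2
        split_ifs with hd
        · rw [dist_eq_norm] at hd
          refine (K_bd hKbound _ (norm_pos_iff.1 (hε.trans hd))).trans ?_
          gcongr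
        · simp; positivity
    refine h1.congr (Eventually.of_forall fun u => ?_)
    dsimp only
    split_ifs <;> ring
  -- the scaled variables
  set ω : EuclideanSpace ℝ (Fin (n+1)) → EuclideanSpace ℝ (Fin (n+1)) :=
    fun y => (dist x y)⁻¹ • (y - x) with hω
  set ξ : EuclideanSpace ℝ (Fin (n+1)) → EuclideanSpace ℝ (Fin n) → EuclideanSpace ℝ (Fin (n+1)) :=
    fun y v => (dist x y)⁻¹ • (G (z + dist x y • v) - G z) with hξ
  have hne : ∀ y ∈ cone a x (N z), 0 < dist x y := by
    intro y hy
    rw [dist_pos]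
    rintro rfl
    simp [cone] at hy
  have hωn : ∀ y ∈ cone a x (N z), ‖ω y‖ = 1 := by
    intro y hy
    have := hne y hy
    simp only [hω, norm_smul, norm_inv, Real.norm_of_nonneg this.le]
    rw [← dist_eq_norm, dist_comm y x, inv_mul_cancel₀ this.ne']
  have hωN : ∀ y ∈ cone a x (N z), a < ⟪ω y, N z⟫ := by
    intro y hy
    have hp := hne y hy
    have : a * ‖y - x‖ < ⟪y - x, N z⟫ := hy
    rw [← dist_eq_norm, dist_comm] at this
    simp only [hω, real_inner_smul_left]
    rw [inv_mul_eq_div, lt_div_iff₀ hp]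
    exact this
  have hωL : ∀ y ∈ cone a x (N z), ∀ v, a ≤ ‖ω y - L v‖ := by
    intro y hy v
    have h1 := real_inner_le_norm (ω y - L v) (N z)
    rw [inner_sub_left, (hN z).2 v, (hN z).1, sub_zero, mul_one] at h1
    exact (hωN y hy).le.trans h1
  have hωL' : ∀ y ∈ cone a x (N z), ∀ v, a ≤ ‖-ω y - L v‖ := by
    intro y hy v
    have := hωL y hy (-v)
    have e : -ω y - L v = -(ω y - L (-v)) := by rw [map_neg]; abel
    rw [e, norm_neg]
    exact this
  have hξv : ∀ y ∈ cone a x (N z), ∀ v, ‖v‖ ≤ ‖ξ y v‖ := by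
    intro y hy v
    have hp := hne y hy
    have h1 := hGanti (z + dist x y • v) z
    rw [add_sub_cancel_left, norm_smul, Real.norm_of_nonneg hp.le] at h1
    simp only [hξ, norm_smul, norm_inv, Real.norm_of_nonneg hp.le]
    rw [inv_mul_eq_div, le_div_iff₀ hp, mul_comm]
    exact h1
  have hr : Tendsto (fun y => dist x y) (𝓝[cone a x (N z)] x) (𝓝[>] 0) := by
    rw [tendsto_nhdsWithin_iff]
    constructor
    · have : Tendsto (fun y => dist x y) (𝓝 x) (𝓝 (dist x x)) :=
        (continuous_const.dist continuous_id).tendsto x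
      rw [dist_self] at this
      exact this.mono_left nhdsWithin_le_nhds
    · filter_upwards [self_mem_nhdsWithin] with y hy using hne y hy
  have hslope' : ∀ v, Tendsto (fun t : ℝ => t⁻¹ • (G (z + t • v) - G z)) (𝓝[>] 0) (𝓝 (L v)) :=
    fun v => (hGd.hasLineDerivAt v).tendsto_slope_zero_right
  have hLv : ∀ v, ‖v‖ ≤ ‖L v‖ := by
    intro v
    refine ge_of_tendsto (hslope' v).norm ?_
    filter_upwards [self_mem_nhdsWithin] with t ht
    have ht : 0 < t := ht
    have h1 := hGanti (z + t • v) z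
    rw [add_sub_cancel_left, norm_smul, Real.norm_of_nonneg ht.le] at h1
    rw [norm_smul, norm_inv, Real.norm_of_nonneg ht.le, inv_mul_eq_div, le_div_iff₀ ht, mul_comm]
    exact h1
  set D := (C / b ^ n + C) * 3 ^ (n + 1) with hD
  have hD0 : 0 ≤ D := by positivity
  have hPb : ∀ y ∈ cone a x (N z), ∀ (v : EuclideanSpace ℝ (Fin n)) (q : EuclideanSpace ℝ (Fin (n+1))),
      ‖v‖ ≤ ‖q‖ → |Phi K b (ω y) q| ≤ D / (1 + ‖v‖) ^ (n+1) := by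
    intro y hy v q hvq
    refine (Phi_bound hC hKsmooth hKbound b hb0 (hba.trans ha1) (ω y) q (hωn y hy)).trans ?_
    gcongr
  have hξc : ∀ y, Continuous (ξ y) := fun y => by
    simp only [hξ]
    fun_prop
  set J1 : EuclideanSpace ℝ (Fin (n+1)) → EuclideanSpace ℝ (Fin n) → ℝ := fun y v =>
    Phi K b (ω y) (ξ y v) * (g (G (z + dist x y • v)) * h (z + dist x y • v)) with hJ1
  set J2 : EuclideanSpace ℝ (Fin (n+1)) → EuclideanSpace ℝ (Fin n) → ℝ := fun y v =>
    Phi K b (ω y) (L v) * (g (G z) * ((h (z + dist x y • v) + h (z - dist x y • v)) / 2)) with hJ2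
  have hJ1m : ∀ y, Measurable (J1 y) := fun y => by
    refine ((Phi_meas hKm b (ω y)).comp (hξc y).measurable).mul (Measurable.mul ?_ ?_)
    · exact (hg.continuous.comp (hGcont.comp (by fun_prop))).measurable
    · exact hhm.comp (by fun_prop)
  have hJ2m : ∀ y, Measurable (J2 y) := fun y => by
    refine ((Phi_meas hKm b (ω y)).comp L.continuous.measurable).mul
      (measurable_const.mul (Measurable.div_const (Measurable.add ?_ ?_) _))
    · exact hhm.comp (by fun_prop)
    · exact hhm.comp (by fun_prop)
  have hJ1b : ∀ y ∈ cone a x (N z), ∀ v, ‖J1 y v‖ ≤ D * (Mg * B) / (1 + ‖v‖) ^ (n+1) := by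
    intro y hy v
    rw [mul_div_right_comm, norm_mul, norm_mul]
    exact mul_le_mul (hPb y hy v _ (hξv y hy v))
      (mul_le_mul (hMg _) (hB _) (norm_nonneg _) hMg0) (by positivity) (by positivity)
  have hJ2b : ∀ y ∈ cone a x (N z), ∀ v, ‖J2 y v‖ ≤ D * (Mg * B) / (1 + ‖v‖) ^ (n+1) := by
    intro y hy v
    rw [mul_div_right_comm, norm_mul, norm_mul]
    refine mul_le_mul (hPb y hy v _ (hLv v))
      (mul_le_mul (hMg _) ?_ (norm_nonneg _) hMg0) (by positivity) (by positivity)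
    have h1 := hB (z + dist x y • v)
    have h2 := hB (z - dist x y • v)
    rw [Real.norm_eq_abs]
    rw [abs_le] at h1 h2 ⊢
    constructor <;> linarith [h1.1, h1.2, h2.1, h2.2]
  have hdec := integrable_decay lam n hfr (D * (Mg * B))
  have hJ1i : ∀ y ∈ cone a x (N z), Integrable (J1 y) lam := fun y hy =>
    hdec.mono' (hJ1m y).aestronglyMeasurable (Eventually.of_forall (hJ1b y hy))
  have hJ2i : ∀ y ∈ cone a x (N z), Integrable (J2 y) lam := fun y hy =>
    hdec.mono' (hJ2m y).aestronglyMeasurable (Eventually.of_forall (hJ2b y hy))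
  have hJ20 : ∀ y, ∫ v, J2 y v ∂lam = 0 := by
    intro y
    have h1 : ∫ v, J2 y (-v) ∂lam = ∫ v, J2 y v ∂lam := integral_neg_eq_self _ lam
    have h2 : ∀ v, J2 y (-v) = - J2 y v := fun v => by
      simp only [hJ2, map_neg, Phi_odd hKodd, smul_neg, sub_neg_eq_add, ← sub_eq_add_neg]
      ring
    simp only [h2, integral_neg] at h1
    linarith
  have hmain : ∀ y ∈ cone a x (N z),
      (TepsDen K ((μH[n]).restrict (range G)) g (b * dist x y) y +
        TepsDen K ((μH[n]).restrict (range G)) g (b * dist x y) ((2 : ℝ) • x - y)) / 2 =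
      TepsDen K ((μH[n]).restrict (range G)) g (dist x y) x + ∫ v, (J1 y v - J2 y v) ∂lam := by
    intro y hy
    have hp := hne y hy
    have hbp : 0 < b * dist x y := by positivity
    have hcomb : ∀ f1 f2 f3 : EuclideanSpace ℝ (Fin n) → ℝ, Integrable f1 lam → Integrable f2 lam →
        Integrable f3 lam → ((∫ u, f1 u ∂lam) + ∫ u, f2 u ∂lam) / 2 - ∫ u, f3 u ∂lam =
          ∫ u, ((f1 u + f2 u) / 2 - f3 u) ∂lam := by
      intro f1 f2 f3 i1 i2 i3
      have i4 : Integrable (fun u => (f1 u + f2 u) / 2) lam := (i1.add i2).div_const 2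
      rw [integral_sub i4 i3, integral_div, integral_add i1 i2]
    rw [integral_sub (hJ1i y hy) (hJ2i y hy), hJ20, sub_zero, ← sub_eq_iff_eq_add', hT, hT, hT,
      hcomb _ _ _ (hTi _ _ hbp) (hTi _ _ hbp) (hTi _ _ hp),
      integral_scale lam n hfr _ z (dist x y) hp]
    refine integral_congr_ae (Eventually.of_forall fun v => ?_)
    set u := z + dist x y • v with hu
    set r := dist x y with hrr
    have hrω : r • ω y = y - x := by
      simp only [hω]; rw [smul_smul, mul_inv_cancel₀ hp.ne', one_smul]
    have hrξ : r • ξ y v = G u - x := by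
      simp only [hξ]; rw [smul_smul, mul_inv_cancel₀ hp.ne', one_smul, ← hxG]
    have t1 := trunc_scale hhom b r (g (G u)) hp y (G u) (ω y - ξ y v)
      (by rw [smul_sub, hrω, hrξ]; abel)
    have t2 := trunc_scale hhom b r (g (G u)) hp ((2:ℝ) • x - y) (G u) (-ω y - ξ y v)
      (by rw [smul_sub, smul_neg, hrω, hrξ, two_smul]; abel)
    have t3 := trunc_scale hhom 1 r (g (G u)) hp x (G u) (-ξ y v)
      (by rw [smul_neg, hrξ]; abel)
    rw [one_mul, norm_neg] at t3
    have hfin : J1 y v = Phi K b (ω y) (ξ y v) * (g (G u) * h u) := rfl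
    rw [hfin]
    unfold Phi
    linear_combination (h u : ℝ) / 2 * t1 + (h u : ℝ) / 2 * t2 - (h u : ℝ) * t3
  have hlim : Tendsto (fun y => ∫ v, (J1 y v - J2 y v) ∂lam) (𝓝[cone a x (N z)] x) (𝓝 0) := by
    have h0 : ∫ _v : EuclideanSpace ℝ (Fin n), (0:ℝ) ∂lam = 0 := by simp
    rw [← h0]
    refine tendsto_integral_filter_of_dominated_convergence
      (fun v => D * (Mg * B) / (1 + ‖v‖) ^ (n+1) + D * (Mg * B) / (1 + ‖v‖) ^ (n+1)) ?_ ?_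
      (hdec.add hdec) ?_
    · exact Eventually.of_forall fun y => ((hJ1m y).sub (hJ2m y)).aestronglyMeasurable
    · filter_upwards [self_mem_nhdsWithin] with y hy
      exact Eventually.of_forall fun v =>
        (norm_sub_le _ _).trans (add_le_add (hJ1b y hy v) (hJ2b y hy v))
    · have hnull : ∀ᵐ v ∂lam, ¬ ‖L v‖ = 1 := by
        rw [ae_iff]; simpa using null_sphere lam L
      filter_upwards [hnull] with v hv
      have hξt : Tendsto (fun y => ξ y v) (𝓝[cone a x (N z)] x) (𝓝 (L v)) := (hslope' v).comp hr
      have hP := Phi_conv hC hKsmooth hKbound a b hb0 hba ω (fun y => ξ y v) (L v) hv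
        (by filter_upwards [self_mem_nhdsWithin] with y hy using hωL y hy v)
        (by filter_upwards [self_mem_nhdsWithin] with y hy using hωL' y hy v) hξt
      have hr0 : Tendsto (fun y => dist x y) (𝓝[cone a x (N z)] x) (𝓝 0) :=
        hr.mono_right nhdsWithin_le_nhds
      have hrv : Tendsto (fun y => dist x y • v) (𝓝[cone a x (N z)] x) (𝓝 0) := by
        simpa using hr0.smul_const v
      have hgt : Tendsto (fun y => g (G (z + dist x y • v)) - g (G z))
          (𝓝[cone a x (N z)] x) (𝓝 0) := by
        have h1 : Tendsto (fun u => g (G (z + u))) (𝓝 0) (𝓝 (g (G (z + 0)))) :=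
          (hg.continuous.comp (hGcont.comp (continuous_const.add continuous_id))).tendsto 0
        rw [add_zero] at h1
        simpa using (h1.comp hrv).sub_const (g (G z))
      have hht := hsym.comp hrv
      have hbdd : ∀ (f₁ f₂ : EuclideanSpace ℝ (Fin (n+1)) → ℝ) (M : ℝ),
          Tendsto f₁ (𝓝[cone a x (N z)] x) (𝓝 0) → (∀ y ∈ cone a x (N z), |f₂ y| ≤ M) →
          Tendsto (fun y => f₁ y * f₂ y) (𝓝[cone a x (N z)] x) (𝓝 0) := by
        intro f₁ f₂ M h1 h2
        have h3 : Tendsto (fun y => |f₁ y| * M) (𝓝[cone a x (N z)] x) (𝓝 0) := by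
          simpa using h1.abs.mul_const M
        refine squeeze_zero_norm' ?_ h3
        filter_upwards [self_mem_nhdsWithin] with y hy
        rw [norm_mul]
        exact mul_le_mul_of_nonneg_left (h2 y hy) (abs_nonneg _)
      have s1 := hbdd _ (fun y => g (G (z + dist x y • v)) * h (z + dist x y • v)) (Mg * B) hP
        (fun y _ => by
          rw [abs_mul]; exact mul_le_mul (hMg _) (hB _) (abs_nonneg _) hMg0)
      have s2 := hbdd _ (fun y => Phi K b (ω y) (L v) * h (z + dist x y • v))
        (D / (1 + ‖v‖) ^ (n+1) * B) hgt
        (fun y hy => by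
          rw [abs_mul]
          exact mul_le_mul (hPb y hy v _ (hLv v)) (hB _) (abs_nonneg _) (by positivity))
      have s3 := hbdd _ (fun y => Phi K b (ω y) (L v) * (g (G z) / 2))
        (D / (1 + ‖v‖) ^ (n+1) * |g (G z) / 2|) hht
        (fun y hy => by
          rw [abs_mul]
          exact mul_le_mul_of_nonneg_right (hPb y hy v _ (hLv v)) (abs_nonneg _))
      have s := (s1.add s2).add s3
      simp only [add_zero] at s
      refine s.congr fun y => ?_
      simp only [hJ1, hJ2, Function.comp]
      ring
  have hfinal := (hpv.comp hr).add hlim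
  rw [add_zero] at hfinal
  refine hfinal.congr' ?_
  filter_upwards [self_mem_nhdsWithin] with y hy
  exact (hmain y hy).symm
end
end

section
/- Let n ≥ 1 and let K : ℝ^{n+1} → ℝ be an odd kernel of the form K(x) = Ω(x)/|x|^n with Ω homogeneous of degree 0, satisfying |K(x)| ≤ C/|x|^n and |∇K(x)| ≤ C/|x|^{n+1} for x ≠ 0. Let L ⊂ ℝ^{n+1} be an affine hyperplane through a point x with unit normal N. Then for every t > 0 the integral ∫_L (K(x + tN − z) − K(x − tN − z)) dH^n(z) converges absolutely and equals 2 C_K(N), where C_K(N) = ∫_{L(N)} (Ω(y+N) − Ω(y−N))/(2(|y|² + 1)^{n/2}) dH^n(y) and L(N) is the hyperplane through the origin orthogonal to N. In particular, the value is independent of t and of x. -/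
open MeasureTheory Metric Filter Set
open scoped ENNReal NNReal Topology RealInnerProductSpace

noncomputable section

theorem exists_param (n : ℕ) (N : EuclideanSpace ℝ (Fin (n + 1))) (hN : ‖N‖ = 1) :
    ∃ φ : EuclideanSpace ℝ (Fin n) →ₗᵢ[ℝ] EuclideanSpace ℝ (Fin (n + 1)),
      range φ = {y | ⟪y, N⟫ = 0} := by
  have hN0 : N ≠ 0 := by
    rintro rfl
    simp at hN
  haveI : Fact (Module.finrank ℝ (EuclideanSpace ℝ (Fin (n + 1))) = n + 1) := ⟨by simp⟩
  let b := OrthonormalBasis.fromOrthogonalSpanSingleton (𝕜 := ℝ) n hN0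
  refine ⟨(Submodule.subtypeₗᵢ _).comp b.repr.symm.toLinearIsometry, ?_⟩
  ext y
  constructor
  · rintro ⟨w, rfl⟩
    have := (b.repr.symm w).2
    rw [Submodule.mem_orthogonal_singleton_iff_inner_left] at this
    exact this
  · intro hy
    have hy' : y ∈ (Submodule.span ℝ {N})ᗮ := by
      rw [Submodule.mem_orthogonal_singleton_iff_inner_left]
      exact hy
    refine ⟨b.repr ⟨y, hy'⟩, ?_⟩
    simp

instance haar_inst (n : ℕ) : (μH[n] : Measure (EuclideanSpace ℝ (Fin n))).IsAddHaarMeasure := by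
  have := MeasureTheory.isAddHaarMeasure_hausdorffMeasure (E := EuclideanSpace ℝ (Fin n))
  simpa using this

theorem isom_change (n : ℕ) (e : EuclideanSpace ℝ (Fin n) → EuclideanSpace ℝ (Fin (n + 1)))
    (he : Isometry e) (S : Set (EuclideanSpace ℝ (Fin (n + 1)))) (hS : range e = S)
    (f : EuclideanSpace ℝ (Fin (n + 1)) → ℝ) :
    (IntegrableOn f S μH[n] ↔ Integrable (fun w => f (e w)) μH[n]) ∧
    ∫ z in S, f z ∂μH[n] = ∫ w, f (e w) ∂μH[n] := by
  have hm : MeasurableEmbedding e := he.isClosedEmbedding.measurableEmbedding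
  have h := he.map_hausdorffMeasure (d := (n : ℝ)) (Or.inl (by positivity))
  rw [hS] at h
  constructor
  · rw [IntegrableOn, ← h, hm.integrable_map_iff]
    rfl
  · rw [← h, hm.integral_map]

theorem g_bound (n : ℕ)
    (K : EuclideanSpace ℝ (Fin (n + 1)) → ℝ) (C : ℝ)
    (hKbound : ∀ x : EuclideanSpace ℝ (Fin (n + 1)), x ≠ 0 → |K x| ≤ C / ‖x‖ ^ n)
    (hKdiff : DifferentiableOn ℝ K {(0 : EuclideanSpace ℝ (Fin (n + 1)))}ᶜ)
    (hKgrad : ∀ x : EuclideanSpace ℝ (Fin (n + 1)), x ≠ 0 →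
      ‖fderivWithin ℝ K {(0 : EuclideanSpace ℝ (Fin (n + 1)))}ᶜ x‖ ≤ C / ‖x‖ ^ (n + 1))
    (N : EuclideanSpace ℝ (Fin (n + 1))) (hN : ‖N‖ = 1)
    (y : EuclideanSpace ℝ (Fin (n + 1))) (hy : ⟪y, N⟫ = 0) :
    ‖K (y + N) - K (y - N)‖ ≤ 2 * C * 2 ^ (n + 1) / (1 + ‖y‖) ^ (n + 1) := by
  have hN0 : N ≠ 0 := by
    rintro rfl
    simp at hN
  have hC : 0 ≤ C := by
    have := (abs_nonneg _).trans (hKbound N hN0)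
    simpa [hN] using this
  have key : ∀ s : ℝ, ‖y + s • N‖ ^ 2 = ‖y‖ ^ 2 + s ^ 2 := by
    intro s
    rw [norm_add_sq_real, inner_smul_right, hy, norm_smul, hN]
    simp
  have hypos : 0 ≤ ‖y‖ := norm_nonneg y
  rcases le_or_gt ‖y‖ 1 with h1 | h1
  · have hb : ∀ z : EuclideanSpace ℝ (Fin (n + 1)), 1 ≤ ‖z‖ → |K z| ≤ C := by
      intro z hz
      refine (hKbound z (norm_pos_iff.1 (by linarith))).trans ?_
      exact div_le_self hC (one_le_pow₀ hz)
    have e1 : 1 ≤ ‖y + N‖ := by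
      have := key 1
      rw [one_smul] at this
      nlinarith [norm_nonneg (y + N), sq_nonneg ‖y‖]
    have e2 : 1 ≤ ‖y - N‖ := by
      have := key (-1)
      rw [neg_one_smul, ← sub_eq_add_neg] at this
      nlinarith [norm_nonneg (y - N), sq_nonneg ‖y‖]
    have h2 : ‖K (y + N) - K (y - N)‖ ≤ 2 * C := by
      have := norm_sub_le (K (y + N)) (K (y - N))
      have a1 := hb _ e1
      have a2 := hb _ e2
      rw [Real.norm_eq_abs, Real.norm_eq_abs (K (y + N)), Real.norm_eq_abs (K (y - N))] at this
      rw [Real.norm_eq_abs]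
      linarith
    refine h2.trans ?_
    rw [le_div_iff₀ (by positivity)]
    gcongr
    linarith
  · have hseg : ∀ z ∈ segment ℝ (y - N) (y + N), ‖y‖ ≤ ‖z‖ := by
      rintro z ⟨a, b, ha, hb, hab, rfl⟩
      have e : a • (y - N) + b • (y + N) = y + (b - a) • N := by
        have : y = (a + b) • y := by rw [hab, one_smul]
        nth_rewrite 3 [this]
        module
      rw [e]
      have := key (b - a)
      nlinarith [norm_nonneg (y + (b - a) • N), sq_nonneg (b - a)]
    have hz0 : ∀ z ∈ segment ℝ (y - N) (y + N), z ≠ 0 := by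
      intro z hz
      have := hseg z hz
      exact norm_pos_iff.1 (by linarith)
    have mv := Convex.norm_image_sub_le_of_norm_hasFDerivWithin_le (𝕜 := ℝ) (f := K)
      (f' := fun z => fderivWithin ℝ K {(0 : EuclideanSpace ℝ (Fin (n + 1)))}ᶜ z)
      (C := C / ‖y‖ ^ (n + 1))
      (s := segment ℝ (y - N) (y + N)) (x := y - N) (y := y + N)
      (fun z hz => ((hKdiff z (hz0 z hz)).hasFDerivWithinAt).mono (fun u hu => hz0 u hu))
      (fun z hz => (hKgrad z (hz0 z hz)).trans (by
        have := hseg z hz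
        gcongr))
      (convex_segment _ _) (left_mem_segment _ _ _) (right_mem_segment _ _ _)
    have e : ‖y + N - (y - N)‖ = 2 := by
      have : y + N - (y - N) = (2 : ℝ) • N := by module
      rw [this, norm_smul, hN]
      simp
    rw [e] at mv
    refine mv.trans ?_
    rw [div_mul_eq_mul_div, div_le_div_iff₀ (by positivity) (by positivity)]
    have : (1 + ‖y‖) ^ (n + 1) ≤ (2 * ‖y‖) ^ (n + 1) := by
      gcongr
      linarith
    rw [mul_pow] at this
    nlinarith [mul_le_mul_of_nonneg_left this hC]

theorem integral_over_hyperplane_eq_two_CK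
    (n : ℕ) (hn : 1 ≤ n)
    (K Ω : EuclideanSpace ℝ (Fin (n + 1)) → ℝ) (C : ℝ)
    (hΩhom : ∀ x : EuclideanSpace ℝ (Fin (n + 1)), x ≠ 0 → ∀ t : ℝ, 0 < t → Ω (t • x) = Ω x)
    (hKform : ∀ x : EuclideanSpace ℝ (Fin (n + 1)), x ≠ 0 → K x = Ω x / ‖x‖ ^ n)
    (hKodd : ∀ x : EuclideanSpace ℝ (Fin (n + 1)), K (-x) = -K x)
    (hKbound : ∀ x : EuclideanSpace ℝ (Fin (n + 1)), x ≠ 0 → |K x| ≤ C / ‖x‖ ^ n)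
    (hKdiff : DifferentiableOn ℝ K {(0 : EuclideanSpace ℝ (Fin (n + 1)))}ᶜ)
    (hKgrad : ∀ x : EuclideanSpace ℝ (Fin (n + 1)), x ≠ 0 →
      ‖fderivWithin ℝ K {(0 : EuclideanSpace ℝ (Fin (n + 1)))}ᶜ x‖ ≤ C / ‖x‖ ^ (n + 1))
    (x N : EuclideanSpace ℝ (Fin (n + 1))) (hN : ‖N‖ = 1)
    (L : Set (EuclideanSpace ℝ (Fin (n + 1))))
    (hL : L = {z : EuclideanSpace ℝ (Fin (n + 1)) | ⟪z - x, N⟫ = 0})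
    (t : ℝ) (ht : 0 < t) :
    IntegrableOn (fun z => K (x + t • N - z) - K (x - t • N - z)) L μH[n] ∧
    ∫ z in L, (K (x + t • N - z) - K (x - t • N - z)) ∂μH[n] = 2 * CK n Ω N := by
  obtain ⟨φ, hφ⟩ := exists_param n N hN
  have hin : ∀ w, ⟪φ w, N⟫ = 0 := fun w => by
    have : φ w ∈ range φ := mem_range_self w
    rw [hφ] at this
    exact this
  have key : ∀ w (s : ℝ), ‖φ w + s • N‖ ^ 2 = ‖w‖ ^ 2 + s ^ 2 := by
    intro w s
    rw [norm_add_sq_real, inner_smul_right, hin, norm_smul, hN, φ.norm_map]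
    simp
  have kp : ∀ w, ‖φ w + N‖ ^ 2 = ‖w‖ ^ 2 + 1 := fun w => by simpa using key w 1
  have km : ∀ w, ‖φ w - N‖ ^ 2 = ‖w‖ ^ 2 + 1 := fun w => by
    simpa [sub_eq_add_neg] using key w (-1)
  have np : ∀ w, φ w + N ≠ 0 := fun w h => by
    have := kp w
    rw [h] at this
    simp at this
    nlinarith [sq_nonneg ‖w‖]
  have nm : ∀ w, φ w - N ≠ 0 := fun w h => by
    have := km w
    rw [h] at this
    simp at this
    nlinarith [sq_nonneg ‖w‖]
  set g : EuclideanSpace ℝ (Fin n) → ℝ := fun w => K (φ w + N) - K (φ w - N) with hg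
  have hgc : Continuous g := by
    have hc := hKdiff.continuousOn
    have h1 : Continuous fun w => K (φ w + N) :=
      hc.comp_continuous (φ.continuous.add continuous_const) np
    have h2 : Continuous fun w => K (φ w - N) :=
      hc.comp_continuous (φ.continuous.sub continuous_const) nm
    exact h1.sub h2
  have hgi : Integrable g μH[n] := by
    have hI := integrable_one_add_norm (E := EuclideanSpace ℝ (Fin n)) (μ := μH[n])
      (r := (n : ℝ) + 1) (by simp)
    refine (hI.const_mul (2 * C * 2 ^ (n + 1))).mono' hgc.aestronglyMeasurable
      (Eventually.of_forall fun w => ?_)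
    have := g_bound n K C hKbound hKdiff hKgrad N hN (φ w) (hin w)
    rw [φ.norm_map] at this
    refine this.trans (le_of_eq ?_)
    rw [Real.rpow_neg (by positivity), div_eq_mul_inv]
    congr 2
    exact_mod_cast (Real.rpow_natCast (1 + ‖w‖) (n + 1)).symm
  have hhom : ∀ z : EuclideanSpace ℝ (Fin (n + 1)), z ≠ 0 → K (t • z) = (t ^ n)⁻¹ * K z := by
    intro z hz
    rw [hKform _ (smul_ne_zero ht.ne' hz), hKform z hz, hΩhom z hz t ht, norm_smul,
      Real.norm_eq_abs, abs_of_pos ht, mul_pow]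
    field_simp
  have he : Isometry (fun w => x - φ w) := by
    refine Isometry.of_dist_eq fun a b => ?_
    rw [dist_sub_left, φ.isometry.dist_eq]
  have hr : range (fun w => x - φ w) = L := by
    rw [hL]
    ext z
    constructor
    · rintro ⟨w, rfl⟩
      simp [hin w]
    · intro hz
      have : x - z ∈ range φ := by
        rw [hφ]
        have hz' : ⟪z - x, N⟫ = 0 := hz
        show ⟪x - z, N⟫ = 0
        rw [← neg_sub, inner_neg_left, hz', neg_zero]
      obtain ⟨w, hw⟩ := this
      exact ⟨w, by simp [hw]⟩
  obtain ⟨c1, c2⟩ := isom_change n _ he L hr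
    (fun z => K (x + t • N - z) - K (x - t • N - z))
  have hfun : (fun w => K (x + t • N - (x - φ w)) - K (x - t • N - (x - φ w)))
      = fun w => (t ^ n)⁻¹ * g (t⁻¹ • w) := by
    funext w
    have e1 : x + t • N - (x - φ w) = t • (φ (t⁻¹ • w) + N) := by
      rw [φ.map_smul, smul_add, smul_inv_smul₀ ht.ne']
      abel
    have e2 : x - t • N - (x - φ w) = t • (φ (t⁻¹ • w) - N) := by
      rw [φ.map_smul, smul_sub, smul_inv_smul₀ ht.ne']
      abel
    rw [e1, e2, hhom _ (np _), hhom _ (nm _), ← mul_sub]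
  refine ⟨c1.2 ?_, ?_⟩
  · rw [hfun]
    exact (hgi.comp_smul (inv_ne_zero ht.ne')).const_mul _
  · rw [c2, hfun, integral_const_mul, Measure.integral_comp_inv_smul, CK,
      (isom_change n φ φ.isometry _ hφ _).2, ← integral_const_mul]
    rw [finrank_euclideanSpace_fin, abs_of_pos (by positivity), smul_eq_mul, ← mul_assoc,
      inv_mul_cancel₀ (by positivity), one_mul]
    congr 1
    funext w
    have hp : ∀ a : ℝ, 0 ≤ a → a ^ 2 = ‖w‖ ^ 2 + 1 →
        a ^ n = (‖w‖ ^ 2 + 1) ^ ((n : ℝ) / 2) := by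
      intro a ha h
      rw [← h, ← Real.rpow_natCast a 2, ← Real.rpow_mul ha, ← Real.rpow_natCast a n]
      congr 1
      push_cast
      ring
    simp only [hg]
    rw [hKform _ (np w), hKform _ (nm w), hp _ (norm_nonneg _) (kp w),
      hp _ (norm_nonneg _) (km w), φ.norm_map]
    have : 0 < (‖w‖ ^ 2 + 1) ^ ((n : ℝ) / 2) := by positivity
    field_simp
end
end

section
/- Let n ≥ 1 and let K : ℝ^{n+1} → ℝ be an odd kernel of the form K(x) = Ω(x)/|x|^n with Ω homogeneous of degree 0, satisfying |K(x)| ≤ C/|x|^n and |∇K(x)| ≤ C/|x|^{n+1} for x ≠ 0. Then for every unit vector N ∈ ℝ^{n+1}, the integral C_K(N) = ∫_{L(N)} (Ω(y+N) − Ω(y−N))/(2(|y|² + 1)^{n/2}) dH^n(y), where L(N) is the hyperplane through the origin orthogonal to N, converges absolutely, and there is a constant C' depending only on n and C such that |C_K(N)| ≤ C' for all unit vectors N. -/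
open MeasureTheory Metric Filter Set
open scoped ENNReal NNReal Topology RealInnerProductSpace

noncomputable section

lemma aux_norm {E : Type*} [NormedAddCommGroup E] [InnerProductSpace ℝ E] (y N : E)
    (hN : ‖N‖ = 1) (h : ⟪y, N⟫ = 0) (t : ℝ) : ‖y + t • N‖ ^ 2 = ‖y‖ ^ 2 + t ^ 2 := by
  rw [norm_add_sq_real, inner_smul_right, h, norm_smul, hN]
  simp

lemma aux_bound {E : Type*} [NormedAddCommGroup E] [InnerProductSpace ℝ E] (n : ℕ) (C : ℝ)
    (hC : 0 < C) (K : E → ℝ)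
    (hK : ∀ x : E, x ≠ 0 → |K x| ≤ C / ‖x‖ ^ n)
    (hd : DifferentiableOn ℝ K {(0 : E)}ᶜ)
    (hg : ∀ x : E, x ≠ 0 → ‖fderivWithin ℝ K {(0 : E)}ᶜ x‖ ≤ C / ‖x‖ ^ (n + 1))
    (y N : E) (hN : ‖N‖ = 1) (h : ⟪y, N⟫ = 0) :
    |(K (y + N) - K (y - N)) / 2| ≤ C * 2 ^ (n + 1) * (1 + ‖y‖) ^ (-((n : ℝ) + 1)) := by
  have hrp : (1 + ‖y‖) ^ (-((n : ℝ) + 1)) = ((1 + ‖y‖) ^ (n + 1))⁻¹ := by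
    rw [Real.rpow_neg (by positivity)]
    congr 1
    exact_mod_cast Real.rpow_natCast (1 + ‖y‖) (n + 1)
  rw [hrp, ← div_eq_mul_inv, abs_div, abs_two]
  have hsq : ∀ t : ℝ, ‖y + t • N‖ ^ 2 = ‖y‖ ^ 2 + t ^ 2 := aux_norm y N hN h
  rcases le_or_gt ‖y‖ 1 with hy | hy
  · have key : ∀ t : ℝ, t ^ 2 = 1 → |K (y + t • N)| ≤ C := by
      intro t ht
      have h1 : 1 ≤ ‖y + t • N‖ := by
        have := hsq t
        nlinarith [norm_nonneg (y + t • N), sq_nonneg ‖y‖]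
      have h0 : y + t • N ≠ 0 := by
        rw [← norm_pos_iff]; linarith
      exact (hK _ h0).trans (div_le_self hC.le (one_le_pow₀ h1))
    have k1 := key 1 (by norm_num)
    have k2 := key (-1) (by norm_num)
    rw [one_smul] at k1
    rw [neg_one_smul, ← sub_eq_add_neg] at k2
    have h3 : |K (y + N) - K (y - N)| ≤ 2 * C := by
      have := abs_sub (K (y + N)) (K (y - N))
      linarith
    have h4 : C ≤ C * 2 ^ (n + 1) / (1 + ‖y‖) ^ (n + 1) := by
      rw [le_div_iff₀ (by positivity)]
      gcongr
      linarith
    linarith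
  · have hseg : ∀ x ∈ segment ℝ (y - N) (y + N), ‖y‖ ≤ ‖x‖ := by
      intro x hx
      obtain ⟨a, b, ha, hb, hab, rfl⟩ := hx
      have : a • (y - N) + b • (y + N) = y + (b - a) • N := by
        have : y = (a + b) • y := by rw [hab, one_smul]
        rw [this]; rw [hab]; nth_rewrite 3 [this]; module
      rw [this]
      have := hsq (b - a)
      exact abs_le_of_sq_le_sq' (by nlinarith [sq_nonneg (b - a)]) (norm_nonneg _) |>.2
    have hne : ∀ x ∈ segment ℝ (y - N) (y + N), x ≠ 0 := by
      intro x hx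
      rw [← norm_pos_iff]
      linarith [hseg x hx]
    have mv := (convex_segment (𝕜 := ℝ) (y - N) (y + N)).norm_image_sub_le_of_norm_hasFDerivWithin_le
      (𝕜 := ℝ) (f := K) (C := C / ‖y‖ ^ (n + 1)) (f' := fderivWithin ℝ K {(0 : E)}ᶜ)
      (fun x hx => ((hd x (hne x hx)).hasFDerivWithinAt).mono (fun z hz => hne z hz))
      (fun x hx => (hg x (hne x hx)).trans (by
        have := hseg x hx
        gcongr))
      (left_mem_segment ℝ _ _) (right_mem_segment ℝ _ _)
    have h2 : ‖(y + N) - (y - N)‖ = 2 := by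
      have : (y + N) - (y - N) = (2 : ℝ) • N := by module
      rw [this, norm_smul, hN]; norm_num
    rw [h2, Real.norm_eq_abs] at mv
    have h4 : C / ‖y‖ ^ (n + 1) ≤ C * 2 ^ (n + 1) / (1 + ‖y‖) ^ (n + 1) := by
      rw [div_le_div_iff₀ (by positivity) (by positivity), mul_assoc, ← mul_pow]
      gcongr
      linarith
    linarith

lemma aux_pow (n : ℕ) (r : ℝ) (hr : 0 ≤ r) (s : ℝ) (h : r ^ 2 = s) :
    s ^ ((n : ℝ) / 2) = r ^ n := by
  rw [← h, ← Real.rpow_natCast r 2, ← Real.rpow_mul hr, ← Real.rpow_natCast r n]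
  congr 1
  push_cast
  ring

theorem CK_integrable_and_uniformly_bounded
    (n : ℕ) (hn : 1 ≤ n) (C : ℝ) (hC : 0 < C) :
    ∃ C' : ℝ, 0 < C' ∧
      ∀ (K Ω : EuclideanSpace ℝ (Fin (n + 1)) → ℝ),
        (∀ x : EuclideanSpace ℝ (Fin (n + 1)), x ≠ 0 → ∀ t : ℝ, 0 < t → Ω (t • x) = Ω x) →
        (∀ x : EuclideanSpace ℝ (Fin (n + 1)), x ≠ 0 → K x = Ω x / ‖x‖ ^ n) →
        (∀ x : EuclideanSpace ℝ (Fin (n + 1)), K (-x) = -K x) →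
        (∀ x : EuclideanSpace ℝ (Fin (n + 1)), x ≠ 0 → |K x| ≤ C / ‖x‖ ^ n) →
        DifferentiableOn ℝ K {(0 : EuclideanSpace ℝ (Fin (n + 1)))}ᶜ →
        (∀ x : EuclideanSpace ℝ (Fin (n + 1)), x ≠ 0 →
          ‖fderivWithin ℝ K {(0 : EuclideanSpace ℝ (Fin (n + 1)))}ᶜ x‖ ≤ C / ‖x‖ ^ (n + 1)) →
        ∀ N : EuclideanSpace ℝ (Fin (n + 1)), ‖N‖ = 1 →
          IntegrableOn
            (fun y => (Ω (y + N) - Ω (y - N)) / (2 * (‖y‖ ^ 2 + 1) ^ ((n : ℝ) / 2)))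
            {y : EuclideanSpace ℝ (Fin (n + 1)) | ⟪y, N⟫ = 0} μH[n] ∧
          |CK n Ω N| ≤ C' := by
  have hH : (μH[n] : Measure (EuclideanSpace ℝ (Fin n))).IsAddHaarMeasure := by
    have := isAddHaarMeasure_hausdorffMeasure (E := EuclideanSpace ℝ (Fin n))
    simpa using this
  have hint : Integrable (fun z : EuclideanSpace ℝ (Fin n) =>
      C * 2 ^ (n + 1) * (1 + ‖z‖) ^ (-((n : ℝ) + 1))) μH[n] := by
    refine Integrable.const_mul (integrable_one_add_norm ?_) _
    simp
  have hnn : 0 ≤ ∫ z : EuclideanSpace ℝ (Fin n),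
      C * 2 ^ (n + 1) * (1 + ‖z‖) ^ (-((n : ℝ) + 1)) ∂μH[n] :=
    integral_nonneg (fun z => by positivity)
  refine ⟨(∫ z : EuclideanSpace ℝ (Fin n),
      C * 2 ^ (n + 1) * (1 + ‖z‖) ^ (-((n : ℝ) + 1)) ∂μH[n]) + 1, by linarith, ?_⟩
  intro K Ω _ hKΩ _ hK hd hg N hN
  have hN0 : N ≠ 0 := by rw [← norm_pos_iff, hN]; norm_num
  haveI : Fact (Module.finrank ℝ (EuclideanSpace ℝ (Fin (n + 1))) = n + 1) := ⟨by simp⟩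
  let e := (OrthonormalBasis.fromOrthogonalSpanSingleton (𝕜 := ℝ) n hN0).repr
  let φ : EuclideanSpace ℝ (Fin n) →ₗᵢ[ℝ] EuclideanSpace ℝ (Fin (n + 1)) :=
    (Submodule.subtypeₗᵢ (ℝ ∙ N)ᗮ).comp e.symm.toLinearIsometry
  have hφmem : ∀ z, ⟪φ z, N⟫ = 0 := by
    intro z
    exact Submodule.mem_orthogonal_singleton_iff_inner_left.1 (e.symm z).2
  have hrange : range φ = {y : EuclideanSpace ℝ (Fin (n + 1)) | ⟪y, N⟫ = 0} := by
    ext y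
    constructor
    · rintro ⟨z, rfl⟩
      exact hφmem z
    · intro hy
      refine ⟨e ⟨y, Submodule.mem_orthogonal_singleton_iff_inner_left.2 hy⟩, ?_⟩
      simp [φ]
  have hmap := φ.isometry.map_hausdorffMeasure (d := (n : ℝ)) (Or.inl (by positivity))
  rw [hrange] at hmap
  have hemb : MeasurableEmbedding φ := φ.isometry.isClosedEmbedding.measurableEmbedding
  have hnz : ∀ (t : ℝ), t ^ 2 = 1 → ∀ z, φ z + t • N ≠ 0 := by
    intro t ht z h0
    have := aux_norm (φ z) N hN (hφmem z) t
    rw [h0, ht] at this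
    simp at this
    nlinarith [sq_nonneg ‖z‖]
  have hnz1 : ∀ z, φ z + N ≠ 0 := fun z => by simpa using hnz 1 (by norm_num) z
  have hnz2 : ∀ z, φ z - N ≠ 0 := fun z => by
    simpa [sub_eq_add_neg] using hnz (-1) (by norm_num) z
  have hfun : ∀ z, (Ω (φ z + N) - Ω (φ z - N)) / (2 * (‖φ z‖ ^ 2 + 1) ^ ((n : ℝ) / 2))
      = (K (φ z + N) - K (φ z - N)) / 2 := by
    intro z
    have e1 : ‖φ z + N‖ ^ 2 = ‖φ z‖ ^ 2 + 1 := by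
      simpa using aux_norm (φ z) N hN (hφmem z) 1
    have e2 : ‖φ z - N‖ ^ 2 = ‖φ z‖ ^ 2 + 1 := by
      simpa [sub_eq_add_neg] using aux_norm (φ z) N hN (hφmem z) (-1)
    rw [hKΩ _ (hnz1 z), hKΩ _ (hnz2 z), ← aux_pow n _ (norm_nonneg _) _ e1,
      ← aux_pow n _ (norm_nonneg _) _ e2, ← sub_div, div_div, mul_comm (2 : ℝ)]
  have hcont : Continuous (fun z => (K (φ z + N) - K (φ z - N)) / 2) := by
    have c1 : Continuous (fun z => K (φ z + N)) :=
      hd.continuousOn.comp_continuous (φ.continuous.add continuous_const) hnz1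
    have c2 : Continuous (fun z => K (φ z - N)) :=
      hd.continuousOn.comp_continuous (φ.continuous.sub continuous_const) hnz2
    exact (c1.sub c2).div_const 2
  have hb : ∀ z, ‖(K (φ z + N) - K (φ z - N)) / 2‖ ≤
      C * 2 ^ (n + 1) * (1 + ‖z‖) ^ (-((n : ℝ) + 1)) := by
    intro z
    have := aux_bound n C hC K hK hd hg (φ z) N hN (hφmem z)
    rwa [φ.norm_map] at this
  constructor
  · rw [IntegrableOn, ← hmap, hemb.integrable_map_iff]
    refine (hint.mono' hcont.aestronglyMeasurable (Eventually.of_forall hb)).congr ?_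
    exact Eventually.of_forall (fun z => (hfun z).symm)
  · rw [CK, ← hmap, hemb.integral_map]
    simp_rw [hfun]
    have := norm_integral_le_of_norm_le hint (Eventually.of_forall hb)
    rw [Real.norm_eq_abs] at this
    linarith
end
end

section
/- For every integer n ≥ 1, ∫_{ℝ^n} (|y|² + 1)^{−(n+1)/2} dy = π^{(n+1)/2} / Γ((n+1)/2), where the integral is with respect to n-dimensional Lebesgue measure and Γ denotes the Gamma function. -/
open MeasureTheory Real

theorem integral_one_add_normSq_rpow_neg
    (n : ℕ) (hn : 1 ≤ n) :
    ∫ y : EuclideanSpace ℝ (Fin n), (‖y‖ ^ 2 + 1) ^ (-(((n : ℝ) + 1) / 2))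
      = Real.pi ^ (((n : ℝ) + 1) / 2) / Real.Gamma (((n : ℝ) + 1) / 2) := by
  set a : ℝ := ((n : ℝ) + 1) / 2 with ha
  have ha0 : 0 < a := by positivity
  have hG : 0 < Real.Gamma a := Real.Gamma_pos_of_pos ha0
  let F : EuclideanSpace ℝ (Fin n) → ℝ → ℝ :=
    fun y t => t ^ (a - 1) * Real.exp (-((‖y‖ ^ 2 + 1) * t))
  have h1 : ∀ y, ∫ t in Set.Ioi (0 : ℝ), F y t = (‖y‖ ^ 2 + 1) ^ (-a) * Real.Gamma a := by
    intro y
    have hp : 0 < ‖y‖ ^ 2 + 1 := by positivity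
    have := Real.integral_rpow_mul_exp_neg_mul_Ioi ha0 hp
    rw [one_div, Real.inv_rpow hp.le, ← Real.rpow_neg hp.le] at this
    exact this
  have hbase : Integrable (fun y : EuclideanSpace ℝ (Fin n) => (‖y‖ ^ 2 + 1) ^ (-a)) := by
    have := integrable_rpow_neg_one_add_norm_sq (E := EuclideanSpace ℝ (Fin n)) (μ := volume)
      (r := (n : ℝ) + 1) (by simp)
    convert this using 3
    · ring
    · rw [ha]; ring
  have hint : Integrable (Function.uncurry F)
      ((volume : Measure (EuclideanSpace ℝ (Fin n))).prod (volume.restrict (Set.Ioi (0 : ℝ)))) := by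
    have hm : Measurable (Function.uncurry F) := by
      simp only [F, Function.uncurry_def]
      fun_prop
    rw [integrable_prod_iff hm.aestronglyMeasurable]
    constructor
    · refine Filter.Eventually.of_forall fun y => ?_
      by_contra hcon
      have h0 := h1 y
      simp only [Function.uncurry_apply_pair] at hcon
      rw [integral_undef hcon] at h0
      have : 0 < (‖y‖ ^ 2 + 1) ^ (-a) * Real.Gamma a := by positivity
      linarith
    · refine (hbase.mul_const (Real.Gamma a)).congr (Filter.Eventually.of_forall fun y => ?_)
      simp only [← h1]
      refine setIntegral_congr_fun measurableSet_Ioi fun t ht => ?_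
      have ht' : (0 : ℝ) < t := ht
      simp only [Function.uncurry_apply_pair]
      rw [Real.norm_of_nonneg]
      simp only [F]; positivity
  have hswap := integral_integral_swap hint
  simp only [h1] at hswap
  rw [integral_mul_const] at hswap
  rw [eq_div_iff hG.ne', hswap]
  have h2 : ∀ t ∈ Set.Ioi (0 : ℝ), ∫ y, F y t
      = Real.pi ^ ((n : ℝ) / 2) * (t ^ ((1 / 2 : ℝ) - 1) * Real.exp (-(1 * t))) := by
    intro t ht
    have ht' : (0 : ℝ) < t := ht
    have := GaussianFourier.integral_rexp_neg_mul_sq_norm (V := EuclideanSpace ℝ (Fin n)) ht'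
    have e : ∀ y, F y t = (t ^ (a - 1) * Real.exp (-t)) * Real.exp (-t * ‖y‖ ^ 2) := by
      intro y
      simp only [F]
      rw [mul_assoc, ← Real.exp_add]
      ring_nf
    simp only [e]
    rw [integral_const_mul, this]
    simp only [finrank_euclideanSpace, Fintype.card_fin]
    rw [Real.div_rpow Real.pi_pos.le ht'.le, one_mul,
      show (1 / 2 : ℝ) - 1 = (a - 1) - (n : ℝ) / 2 by rw [ha]; ring, Real.rpow_sub ht' (a - 1)]
    ring
  rw [setIntegral_congr_fun measurableSet_Ioi h2, integral_const_mul,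
    Real.integral_rpow_mul_exp_neg_mul_Ioi (by norm_num) one_pos, Real.Gamma_one_half_eq,
    Real.sqrt_eq_rpow, show a = (n : ℝ) / 2 + 1 / 2 by rw [ha]; ring, Real.rpow_add Real.pi_pos]
  simp
end

section
/- Let j ≥ 1 be an odd integer. Then ∫_ℝ ((1 + iy)^j − (iy − 1)^j) / (2 (1 + y²)^{(j+1)/2}) dy = (−1)^{(j−1)/2} π, where the integral is over the real line with respect to Lebesgue measure and the integrand is a complex-valued function of the real variable y. Consequently, for the planar kernel K(z) = z^j/|z|^{j+1} with Ω(z) = z^j/|z|^j, and any unit complex number N, the constant C_K(N) = ∫_{L(N)} (Ω(z+N) − Ω(z−N))/(2(|z|² + 1)^{1/2}) dH¹(z) equals (−1)^{(j−1)/2} π N^j, where L(N) = {t·iN : t ∈ ℝ} is the line through the origin orthogonal to N. -/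
open MeasureTheory Complex
open scoped ENNReal Topology

lemma pk_ne1 (y : ℝ) : (1 + Complex.I * y) ≠ 0 := by
  intro h
  have := congrArg Complex.re h
  simp at this

lemma pk_ne2 (y : ℝ) : (1 - Complex.I * y) ≠ 0 := by
  intro h
  have := congrArg Complex.re h
  simp at this

lemma pk_normSq1 (y : ℝ) : ‖1 + Complex.I * y‖ ^ 2 = 1 + y ^ 2 := by
  rw [← Complex.normSq_eq_norm_sq, Complex.normSq_apply]; simp; ring

lemma pk_normSq2 (y : ℝ) : ‖1 - Complex.I * y‖ ^ 2 = 1 + y ^ 2 := by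
  rw [← Complex.normSq_eq_norm_sq, Complex.normSq_apply]; simp; ring

lemma pk_norm_eq (y : ℝ) : ‖1 + Complex.I * y‖ = ‖1 - Complex.I * y‖ := by
  have h := (pk_normSq1 y).trans (pk_normSq2 y).symm
  exact (pow_left_inj₀ (norm_nonneg _) (norm_nonneg _) two_ne_zero).1 h

noncomputable def pkA (y : ℝ) : ℂ := 1 + Complex.I * y
noncomputable def pkB (y : ℝ) : ℂ := 1 - Complex.I * y

lemma pkA_ne (y : ℝ) : pkA y ≠ 0 := pk_ne1 y
lemma pkB_ne (y : ℝ) : pkB y ≠ 0 := pk_ne2 y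

lemma pkAB (y : ℝ) : pkA y * pkB y = ((1 + y ^ 2 : ℝ) : ℂ) := by
  unfold pkA pkB
  push_cast
  linear_combination (-(y : ℂ) ^ 2) * Complex.I_sq

lemma pk_dA (y : ℝ) : HasDerivAt pkA Complex.I y := by
  have := ((Complex.ofRealCLM.hasDerivAt (x := y)).const_mul Complex.I).const_add 1
  exact this.congr_deriv (by simp)

lemma pk_dB (y : ℝ) : HasDerivAt pkB (-Complex.I) y := by
  have := ((Complex.ofRealCLM.hasDerivAt (x := y)).const_mul Complex.I).const_sub 1
  exact this.congr_deriv (by simp)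

noncomputable def pkF (k : ℕ) (y : ℝ) : ℂ :=
  (pkA y ^ k / pkB y ^ (k + 1) + pkB y ^ k / pkA y ^ (k + 1)) / 2

noncomputable def pkH (k : ℕ) (y : ℝ) : ℂ :=
  pkA y ^ k / pkB y ^ (k + 2) + pkB y ^ k / pkA y ^ (k + 2)

noncomputable def pkG (k : ℕ) (y : ℝ) : ℂ :=
  ((pkA y / pkB y) ^ (k + 1) - (pkB y / pkA y) ^ (k + 1)) / (2 * Complex.I * (k + 1))

lemma pk_rec (k : ℕ) (y : ℝ) : pkF (k + 1) y = pkH k y - pkF k y := by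
  have ha := pkA_ne y
  have hb := pkB_ne y
  have hs : pkB y = 2 - pkA y := by unfold pkA pkB; ring
  unfold pkF pkH
  have h1 : pkA y ^ (k + 1) / pkB y ^ (k + 1 + 1)
      = 2 * (pkA y ^ k / pkB y ^ (k + 2)) - pkA y ^ k / pkB y ^ (k + 1) := by
    have : pkA y = 2 - pkB y := by rw [hs]; ring
    field_simp
    rw [this]; ring
  have h2 : pkB y ^ (k + 1) / pkA y ^ (k + 1 + 1)
      = 2 * (pkB y ^ k / pkA y ^ (k + 2)) - pkB y ^ k / pkA y ^ (k + 1) := by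
    field_simp
    rw [hs]; ring
  rw [h1, h2]; ring

lemma pk_deriv (k : ℕ) (y : ℝ) : HasDerivAt (pkG k) (pkH k y) y := by
  have ha := pkA_ne y
  have hb := pkB_ne y
  have hs : pkB y = 2 - pkA y := by unfold pkA pkB; ring
  have hk : (k : ℂ) + 1 ≠ 0 := by exact_mod_cast Nat.succ_ne_zero k
  have := (((((pk_dA y).div (pk_dB y) hb).pow (k + 1)).sub
    (((pk_dB y).div (pk_dA y) ha).pow (k + 1))).div_const (2 * Complex.I * (k + 1)))
  refine this.congr_deriv ?_
  unfold pkH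
  have e1 : Complex.I * pkB y - pkA y * -Complex.I = 2 * Complex.I := by rw [hs]; ring
  have e2 : -Complex.I * pkA y - pkB y * Complex.I = -(2 * Complex.I) := by rw [hs]; ring
  have hI := Complex.I_ne_zero
  simp only [Pi.div_apply, e1, e2, Nat.add_sub_cancel, div_pow]
  push_cast
  field_simp
  ring

lemma pk_cont : Continuous pkA ∧ Continuous pkB := by
  constructor
  · unfold pkA; fun_prop
  · unfold pkB; fun_prop

lemma pkH_int (k : ℕ) : Integrable (pkH k) := by
  have hc : Continuous (pkH k) := by
    unfold pkH
    exact ((pk_cont.1.pow _).div (pk_cont.2.pow _) fun y => pow_ne_zero _ (pkB_ne y)).add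
      ((pk_cont.2.pow _).div (pk_cont.1.pow _) fun y => pow_ne_zero _ (pkA_ne y))
  refine (integrable_inv_one_add_sq.const_mul 2).mono' hc.aestronglyMeasurable ?_
  refine Filter.Eventually.of_forall fun y => ?_
  have hn : ‖pkA y‖ = ‖pkB y‖ := pk_norm_eq y
  have h2 : ‖pkB y‖ ^ 2 = 1 + y ^ 2 := pk_normSq2 y
  have hp : ‖pkB y‖ ≠ 0 := norm_ne_zero_iff.2 (pkB_ne y)
  unfold pkH
  refine (norm_add_le _ _).trans (le_of_eq ?_)
  simp only [norm_div, norm_pow, hn]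
  rw [← h2]
  field_simp
  ring

lemma pk_tend (l : Filter ℝ) (hl : Filter.Tendsto (fun y : ℝ => ‖y‖) l Filter.atTop) :
    Filter.Tendsto (fun y => pkA y / pkB y) l (𝓝 (-1)) ∧
    Filter.Tendsto (fun y => pkB y / pkA y) l (𝓝 (-1)) := by
  have key : ∀ f : ℝ → ℂ, (∀ y, |y| ≤ ‖f y‖) →
      Filter.Tendsto (fun y => -1 + 2 * (f y)⁻¹) l (𝓝 (-1)) := by
    intro f hf
    have h1 : Filter.Tendsto (fun y => ‖f y‖) l Filter.atTop :=
      Filter.tendsto_atTop_mono hf hl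
    have h2 := (tendsto_norm_atTop_iff_cobounded.1 h1)
    have h3 := (Filter.tendsto_inv₀_cobounded.comp h2)
    simpa using (h3.const_mul 2).const_add (-1)
  constructor
  · refine (key pkB ?_).congr ?_
    · intro y
      have := Complex.abs_im_le_norm (pkB y)
      simpa [pkB] using this
    · intro y
      have hb := pkB_ne y
      have hs : pkA y = 2 - pkB y := by unfold pkA pkB; ring
      rw [hs]; field_simp; ring
  · refine (key pkA ?_).congr ?_
    · intro y
      have := Complex.abs_im_le_norm (pkA y)
      simpa [pkA] using this
    · intro y
      have hb := pkA_ne y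
      have hs : pkB y = 2 - pkA y := by unfold pkA pkB; ring
      rw [hs]; field_simp; ring

lemma pkG_tend (k : ℕ) (l : Filter ℝ)
    (hl : Filter.Tendsto (fun y : ℝ => ‖y‖) l Filter.atTop) :
    Filter.Tendsto (pkG k) l (𝓝 0) := by
  obtain ⟨h1, h2⟩ := pk_tend l hl
  have := ((h1.pow (k + 1)).sub (h2.pow (k + 1))).div_const (2 * Complex.I * (k + 1))
  simpa [pkG] using! this

lemma pkH_integral (k : ℕ) : ∫ y, pkH k y = 0 := by
  have := integral_of_hasDerivAt_of_tendsto (pk_deriv k) (pkH_int k)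
    (pkG_tend k _ Filter.tendsto_abs_atBot_atTop) (pkG_tend k _ Filter.tendsto_abs_atTop_atTop)
  simpa using this

lemma pkF_zero (y : ℝ) : pkF 0 y = (((1 + y ^ 2)⁻¹ : ℝ) : ℂ) := by
  have ha := pkA_ne y
  have hb := pkB_ne y
  have hs : pkB y = 2 - pkA y := by unfold pkA pkB; ring
  rw [Complex.ofReal_inv, ← pkAB]
  unfold pkF
  field_simp
  rw [hs]; ring

lemma pkF_main (k : ℕ) : Integrable (pkF k) ∧ ∫ y, pkF k y = (-1) ^ k * (Real.pi : ℂ) := by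
  induction k with
  | zero =>
    have : pkF 0 = fun y : ℝ => (((1 + y ^ 2)⁻¹ : ℝ) : ℂ) := funext pkF_zero
    rw [this]
    refine ⟨integrable_inv_one_add_sq.ofReal, ?_⟩
    rw [integral_complex_ofReal, integral_univ_inv_one_add_sq]
    simp
  | succ k ih =>
    have : pkF (k + 1) = fun y => pkH k y - pkF k y := funext (pk_rec k)
    rw [this]
    refine ⟨(pkH_int k).sub ih.1, ?_⟩
    rw [integral_sub (pkH_int k) ih.1, pkH_integral, ih.2]
    ring

lemma pk_integrand (k : ℕ) (y : ℝ) :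
    ((1 + Complex.I * y) ^ (2 * k + 1) - (Complex.I * y - 1) ^ (2 * k + 1))
        / (2 * ((1 + y ^ 2 : ℝ) : ℂ) ^ (k + 1)) = pkF k y := by
  have ha := pkA_ne y
  have hb := pkB_ne y
  have h : (Complex.I * y - 1) ^ (2 * k + 1) = - pkB y ^ (2 * k + 1) := by
    rw [← Odd.neg_pow ⟨k, rfl⟩]; unfold pkB; ring
  rw [h, ← pkAB]
  change (pkA y ^ (2 * k + 1) - _) / _ = _
  unfold pkF
  rw [mul_pow]
  field_simp
  ring

theorem planar_kernel_CK
    (j : ℕ) (hj : Odd j) (hj1 : 1 ≤ j) :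
    (∫ y : ℝ, ((1 + Complex.I * y) ^ j - (Complex.I * y - 1) ^ j)
        / (2 * ((1 + y ^ 2 : ℝ) : ℂ) ^ ((j + 1) / 2))
      = ((-1 : ℂ)) ^ ((j - 1) / 2) * (Real.pi : ℂ)) ∧
    ∀ (Ω : ℂ → ℂ), (∀ z : ℂ, z ≠ 0 → Ω z = z ^ j / ((‖z‖ : ℝ) : ℂ) ^ j) →
      ∀ N : ℂ, ‖N‖ = 1 →
        ∫ z in {z : ℂ | ∃ t : ℝ, z = t • (Complex.I * N)},
            (Ω (z + N) - Ω (z - N)) / (2 * ((Real.sqrt (‖z‖ ^ 2 + 1) : ℝ) : ℂ))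
            ∂μH[1]
          = ((-1 : ℂ)) ^ ((j - 1) / 2) * (Real.pi : ℂ) * N ^ j := by
  obtain ⟨k, rfl⟩ := hj
  have e1 : (2 * k + 1 + 1) / 2 = k + 1 := by omega
  have e2 : (2 * k + 1 - 1) / 2 = k := by omega
  rw [e1, e2]
  refine ⟨?_, ?_⟩
  · simp_rw [pk_integrand]
    exact (pkF_main k).2
  · intro Ω hΩ N hN
    have hN0 : N ≠ 0 := by rintro rfl; simp at hN
    set f : ℝ → ℂ := fun t => t • (Complex.I * N) with hf
    have hiso : Isometry f := by
      refine Isometry.of_dist_eq fun s t => ?_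
      rw [dist_eq_norm, dist_eq_norm, hf]
      simp only [← sub_smul, norm_smul, norm_mul, Complex.norm_I, hN, mul_one]
    have hset : {z : ℂ | ∃ t : ℝ, z = t • (Complex.I * N)} = Set.range f := by
      ext z; simp [hf, eq_comm]
    rw [hset, ← hiso.map_hausdorffMeasure (Or.inl zero_le_one), hausdorffMeasure_real,
      hiso.isClosedEmbedding.measurableEmbedding.integral_map]
    rw [← (pkF_main k).2, mul_comm, ← integral_const_mul]
    refine integral_congr_ae (Filter.Eventually.of_forall fun t => ?_)
    have p1 : f t + N = N * (1 + Complex.I * t) := by simp [hf]; ring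
    have p2 : f t - N = N * (Complex.I * t - 1) := by simp [hf]; ring
    have n2 : Complex.I * t - 1 ≠ 0 := by
      rw [← neg_ne_zero, neg_sub]; exact pk_ne2 t
    have m1 : ‖1 + Complex.I * t‖ = Real.sqrt (1 + t ^ 2) := by
      rw [← pk_normSq1, Real.sqrt_sq (norm_nonneg _)]
    have m2 : ‖Complex.I * t - 1‖ = Real.sqrt (1 + t ^ 2) := by
      rw [← pk_normSq2, Real.sqrt_sq (norm_nonneg _), norm_sub_rev]
    have m3 : ‖f t‖ ^ 2 + 1 = 1 + t ^ 2 := by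
      simp [hf, hN]; ring
    have hs : ((Real.sqrt (1 + t ^ 2) : ℝ) : ℂ) ≠ 0 := by
      have : 0 < Real.sqrt (1 + t ^ 2) := Real.sqrt_pos.2 (by positivity)
      exact_mod_cast this.ne'
    have hsq : ((1 + t ^ 2 : ℝ) : ℂ) = ((Real.sqrt (1 + t ^ 2) : ℝ) : ℂ) ^ 2 := by
      rw [← Complex.ofReal_pow, Real.sq_sqrt (by positivity)]
    simp only []
    rw [p1, p2, m3, hΩ _ (mul_ne_zero hN0 (pk_ne1 t)), hΩ _ (mul_ne_zero hN0 n2),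
      norm_mul, norm_mul, hN, one_mul, one_mul, m1, m2, ← pk_integrand, hsq]
    generalize ((Real.sqrt (1 + t ^ 2) : ℝ) : ℂ) = s at hs
    rw [mul_pow, mul_pow]
    field_simp
    rw [← pow_mul]
    ring
end

section
/- Let n ≥ 1 and let K : ℝ^{n+1} → ℝ be an odd kernel satisfying |K(x)| ≤ C/|x|^n for x ≠ 0 and |K(x) − K(x+h)| ≤ C|h|^η/|x|^{n+η} whenever |h| ≤ |x|/2, for some η > 0. Fix b ∈ (0,1). Then there is a constant C' depending only on n, b, η and C such that for every finite signed Radon measure ν on ℝ^{n+1} and all points x ≠ y in ℝ^{n+1}, writing d = |x − y|, one has |T_{bd} ν(y)| ≤ C' ( T_* ν(x) + M_n ν(x) ), where T_ε ν(y) = ∫_{|y−z|>ε} K(y−z) dν(z), T_*ν(x) = sup_{ε>0} |T_ε ν(x)|, and M_n ν(x) = sup_{r>0} |ν|(B(x,r))/r^n. -/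
open MeasureTheory Metric Filter Set
open scoped ENNReal NNReal Topology

noncomputable section

/-- Integral of a real function with respect to a (finite) signed measure,
defined via the Jordan decomposition. -/
def sintegral {α : Type*} [MeasurableSpace α]
    (ν : MeasureTheory.SignedMeasure α) (f : α → ℝ) : ℝ :=
  ∫ x, f x ∂ν.toJordanDecomposition.posPart - ∫ x, f x ∂ν.toJordanDecomposition.negPart

/-- The truncated singular integral `T_ε ν (y) = ∫_{|y-z|>ε} K(y-z) dν(z)`. -/
def Teps {n : ℕ} (K : EuclideanSpace ℝ (Fin (n + 1)) → ℝ)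
    (ν : MeasureTheory.SignedMeasure (EuclideanSpace ℝ (Fin (n + 1)))) (ε : ℝ)
    (y : EuclideanSpace ℝ (Fin (n + 1))) : ℝ :=
  sintegral ν (fun z => if ε < dist y z then K (y - z) else 0)

lemma aux_meas {n : ℕ} (C η : ℝ) (hη : 0 < η) (K : EuclideanSpace ℝ (Fin (n + 1)) → ℝ)
    (hK : ∀ x h : EuclideanSpace ℝ (Fin (n + 1)), x ≠ 0 → ‖h‖ ≤ ‖x‖ / 2 →
          |K x - K (x + h)| ≤ C * ‖h‖ ^ η / ‖x‖ ^ ((n : ℝ) + η)) : Measurable K := by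
  apply measurable_of_continuousOn_compl_singleton 0
  intro x hx
  have hx : x ≠ 0 := hx
  apply ContinuousAt.continuousWithinAt
  have hpos : 0 < ‖x‖ / 2 := by have := norm_pos_iff.2 hx; positivity
  rw [ContinuousAt, tendsto_iff_dist_tendsto_zero]
  have hlim : Tendsto (fun w : EuclideanSpace ℝ (Fin (n + 1)) =>
      C * ‖w - x‖ ^ η / ‖x‖ ^ ((n : ℝ) + η)) (𝓝 x) (𝓝 0) := by
    have h1 : Continuous (fun w : EuclideanSpace ℝ (Fin (n + 1)) =>
      C * ‖w - x‖ ^ η / ‖x‖ ^ ((n : ℝ) + η)) := by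
      apply Continuous.div_const
      apply Continuous.const_mul
      exact (Continuous.rpow_const (by fun_prop) (fun _ => Or.inr hη.le))
    have := h1.tendsto x
    simpa [Real.zero_rpow hη.ne'] using this
  refine squeeze_zero' (Eventually.of_forall fun _ => dist_nonneg) ?_ hlim
  filter_upwards [Metric.ball_mem_nhds x hpos] with w hw
  have hw' : ‖w - x‖ ≤ ‖x‖ / 2 := by
    rw [mem_ball, dist_eq_norm] at hw; exact hw.le
  have := hK x (w - x) hx hw'
  rw [add_sub_cancel] at this
  rwa [dist_comm, Real.dist_eq]

lemma aux_bound_s13 {n : ℕ} (C : ℝ) (hC : 0 < C) (K : EuclideanSpace ℝ (Fin (n + 1)) → ℝ)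
    (hK : ∀ x : EuclideanSpace ℝ (Fin (n + 1)), x ≠ 0 → |K x| ≤ C / ‖x‖ ^ n)
    (ε : ℝ) (hε : 0 < ε) (y z : EuclideanSpace ℝ (Fin (n + 1))) :
    |if ε < dist y z then K (y - z) else 0| ≤ C / ε ^ n := by
  split_ifs with h
  · rw [dist_eq_norm] at h
    have h0 : y - z ≠ 0 := norm_pos_iff.1 (hε.trans h)
    refine (hK _ h0).trans ?_
    gcongr
  · simp; positivity

lemma aux_int {n : ℕ} (C : ℝ) (hC : 0 < C) (K : EuclideanSpace ℝ (Fin (n + 1)) → ℝ)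
    (hm : Measurable K)
    (hK : ∀ x : EuclideanSpace ℝ (Fin (n + 1)), x ≠ 0 → |K x| ≤ C / ‖x‖ ^ n)
    (ε : ℝ) (hε : 0 < ε) (y : EuclideanSpace ℝ (Fin (n + 1)))
    (μ : Measure (EuclideanSpace ℝ (Fin (n + 1)))) [IsFiniteMeasure μ] :
    Integrable (fun z => if ε < dist y z then K (y - z) else 0) μ := by
  refine Integrable.of_bound (C := C / ε ^ n) ?_ (Eventually.of_forall fun z => aux_bound_s13 C hC K hK ε hε y z)
  apply Measurable.aestronglyMeasurable
  apply Measurable.ite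
  · exact measurableSet_lt (by fun_prop) (by fun_prop)
  · exact hm.comp (by fun_prop)
  · fun_prop

lemma aux_point {n : ℕ} (C η b : ℝ) (hC : 0 < C) (hη : 0 < η) (hb : b ∈ Set.Ioo (0 : ℝ) 1)
    (K : EuclideanSpace ℝ (Fin (n + 1)) → ℝ)
    (hK : ∀ x : EuclideanSpace ℝ (Fin (n + 1)), x ≠ 0 → |K x| ≤ C / ‖x‖ ^ n)
    (hK2 : ∀ x h : EuclideanSpace ℝ (Fin (n + 1)), x ≠ 0 → ‖h‖ ≤ ‖x‖ / 2 →
          |K x - K (x + h)| ≤ C * ‖h‖ ^ η / ‖x‖ ^ ((n : ℝ) + η))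
    (x y z : EuclideanSpace ℝ (Fin (n + 1))) (hxy : x ≠ y) :
    ∃ k : ℕ, z ∈ ball x (2 ^ (k + 2) * dist x y) ∧
      |(if b * dist x y < dist y z then K (y - z) else 0)
        - (if 2 * dist x y < dist x z then K (x - z) else 0)|
        ≤ C / b ^ n / (dist x y ^ n * (2 ^ k) ^ n) * ((2:ℝ) ^ (-η)) ^ k := by
  obtain ⟨hb0, hb1⟩ := hb
  have hd : 0 < dist x y := dist_pos.2 hxy
  set d := dist x y with hdd
  by_cases h : 2 * d < dist x z
  · have hyz : b * d < dist y z := by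
      have := dist_triangle x y z
      nlinarith
    rw [if_pos h, if_pos hyz]
    obtain ⟨k, hk1, hk2⟩ := exists_nat_pow_near (x := dist x z / d) (y := (2:ℝ))
      (by rw [le_div_iff₀ hd]; linarith) (by norm_num)
    rw [le_div_iff₀ hd] at hk1
    rw [div_lt_iff₀ hd] at hk2
    refine ⟨k, ?_, ?_⟩
    · rw [mem_ball, dist_comm]
      refine hk2.trans ?_
      gcongr <;> norm_num
    · have hxz : 0 < dist x z := by linarith
      have h1 := hK2 (x - z) (y - x) (by rw [← norm_pos_iff, ← dist_eq_norm]; exact hxz)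
        (by rw [← dist_eq_norm, ← dist_eq_norm, dist_comm y x]; linarith)
      rw [show x - z + (y - x) = y - z by abel, ← dist_eq_norm, ← dist_eq_norm, dist_comm y x,
        abs_sub_comm] at h1
      refine h1.trans ?_
      have h2 : (2 ^ k * d) ^ ((n:ℝ) + η) ≤ dist x z ^ ((n : ℝ) + η) := by
        gcongr
      have h2p : 0 < (2 ^ k * d) ^ ((n:ℝ) + η) := by positivity
      calc C * d ^ η / dist x z ^ ((n : ℝ) + η) ≤ C * d ^ η / (2 ^ k * d) ^ ((n:ℝ) + η) := by
            gcongr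
        _ = C / (d ^ n * (2 ^ k) ^ n) * ((2:ℝ) ^ (-η)) ^ k := by
            rw [Real.rpow_add (by positivity), Real.rpow_natCast, mul_pow,
              Real.mul_rpow (by positivity) hd.le, Real.rpow_neg (by norm_num), inv_pow,
              ← Real.rpow_natCast (2 ^ η), ← Real.rpow_mul (by norm_num), mul_comm η,
              Real.rpow_mul (by norm_num), Real.rpow_natCast]
            have : 0 < d ^ η := by positivity
            field_simp
        _ ≤ _ := by
            have : C ≤ C / b ^ n := by
              rw [le_div_iff₀ (by positivity)]
              have := pow_le_one₀ (n := n) hb0.le hb1.le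
              nlinarith
            gcongr
  · rw [if_neg h, sub_zero]
    refine ⟨0, ?_, ?_⟩
    · rw [mem_ball, dist_comm]; push Not at h; norm_num; linarith
    · have := aux_bound_s13 C hC K hK (b * d) (by positivity) y z
      refine this.trans (le_of_eq ?_)
      rw [mul_pow]
      simp
      field_simp

theorem truncated_bounded_by_maximal
    (n : ℕ) (hn : 1 ≤ n) (C η b : ℝ) (hC : 0 < C) (hη : 0 < η) (hb : b ∈ Set.Ioo (0 : ℝ) 1) :
    ∃ C' : ℝ, 0 < C' ∧
      ∀ K : EuclideanSpace ℝ (Fin (n + 1)) → ℝ,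
        (∀ x : EuclideanSpace ℝ (Fin (n + 1)), K (-x) = -K x) →
        (∀ x : EuclideanSpace ℝ (Fin (n + 1)), x ≠ 0 → |K x| ≤ C / ‖x‖ ^ n) →
        (∀ x h : EuclideanSpace ℝ (Fin (n + 1)), x ≠ 0 → ‖h‖ ≤ ‖x‖ / 2 →
          |K x - K (x + h)| ≤ C * ‖h‖ ^ η / ‖x‖ ^ ((n : ℝ) + η)) →
        ∀ (ν : MeasureTheory.SignedMeasure (EuclideanSpace ℝ (Fin (n + 1))))
          (x y : EuclideanSpace ℝ (Fin (n + 1))), x ≠ y →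
          ∀ T M : ℝ,
            (∀ ε : ℝ, 0 < ε → |Teps K ν ε x| ≤ T) →
            (∀ r : ℝ, 0 < r → (ν.totalVariation (ball x r)).toReal ≤ M * r ^ n) →
            |Teps K ν (b * dist x y) y| ≤ C' * (T + M) := by
  have hq0 : (0:ℝ) < 2 ^ (-η) := by positivity
  have hq1 : (2:ℝ) ^ (-η) < 1 := Real.rpow_lt_one_of_one_lt_of_neg (by norm_num) (by linarith)
  have hb0 := hb.1
  have hA : 0 < C / b ^ n * 4 ^ n * (1 - (2:ℝ) ^ (-η))⁻¹ := by
    have : 0 < 1 - (2:ℝ) ^ (-η) := by linarith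
    positivity
  set q := (2:ℝ) ^ (-η) with hq
  set A := C / b ^ n * 4 ^ n * (1 - q)⁻¹ with hAdef
  refine ⟨1 + A, by positivity, ?_⟩
  intro K _ hK hK2 ν x y hxy T M hT hM
  have hd : 0 < dist x y := dist_pos.2 hxy
  have hm := aux_meas C η hη K hK2
  have hT0 : 0 ≤ T := (abs_nonneg _).trans (hT 1 one_pos)
  have hM0 : 0 ≤ M := by simpa using ENNReal.toReal_nonneg.trans (hM 1 one_pos)
  set d := dist x y with hdd
  have hTx := hT (2 * d) (by positivity)
  set g : EuclideanSpace ℝ (Fin (n + 1)) → ℝ := fun z =>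
    (if b * d < dist y z then K (y - z) else 0) - (if 2 * d < dist x z then K (x - z) else 0)
    with hg
  have iy := fun (μ : Measure (EuclideanSpace ℝ (Fin (n + 1)))) [IsFiniteMeasure μ] =>
    aux_int C hC K hm hK (b * d) (by positivity) y μ
  have ix := fun (μ : Measure (EuclideanSpace ℝ (Fin (n + 1)))) [IsFiniteMeasure μ] =>
    aux_int C hC K hm hK (2 * d) (by positivity) x μ
  have ig := fun (μ : Measure (EuclideanSpace ℝ (Fin (n + 1)))) [IsFiniteMeasure μ] =>
    (iy μ).sub (ix μ)
  set P := ν.toJordanDecomposition.posPart with hP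
  set N := ν.toJordanDecomposition.negPart with hN
  have htv : ν.totalVariation = P + N := rfl
  have hdiff : Teps K ν (b * d) y - Teps K ν (2 * d) x = ∫ z, g z ∂P - ∫ z, g z ∂N := by
    have e1 : ∫ z, g z ∂P = _ := integral_sub (iy P) (ix P)
    have e2 : ∫ z, g z ∂N = _ := integral_sub (iy N) (ix N)
    rw [e1, e2]
    simp only [Teps, sintegral]
    ring
  have habs : |∫ z, g z ∂P - ∫ z, g z ∂N| ≤ ∫ z, ‖g z‖ ∂(P + N) := by
    have gP : Integrable g P := ig P
    have gN : Integrable g N := ig N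
    rw [integral_add_measure gP.norm gN.norm]
    refine (abs_sub _ _).trans (add_le_add ?_ ?_)
    · exact norm_integral_le_integral_norm g
    · exact norm_integral_le_integral_norm g
  have hmain : ∫ z, ‖g z‖ ∂(P + N) ≤ A * M := by
    have higP : Integrable g (P + N) := ig (P + N)
    rw [integral_norm_eq_lintegral_enorm higP.1]
    apply ENNReal.toReal_le_of_le_ofReal (by positivity)
    set a : ℕ → ℝ := fun k => C / b ^ n / (d ^ n * (2 ^ k) ^ n) * q ^ k with ha
    have ha0 : ∀ k, 0 ≤ a k := fun k => by positivity
    calc ∫⁻ z, ‖g z‖ₑ ∂(P + N)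
        ≤ ∫⁻ z, ∑' k : ℕ, (ball x (2 ^ (k + 2) * d)).indicator
            (fun _ => ENNReal.ofReal (a k)) z ∂(P + N) := by
          apply lintegral_mono
          intro z
          obtain ⟨k, hk1, hk2⟩ := aux_point C η b hC hη hb K hK hK2 x y z hxy
          refine le_trans ?_ (ENNReal.le_tsum k)
          rw [indicator_of_mem hk1]
          beta_reduce
          rw [Real.enorm_eq_ofReal_abs]
          exact ENNReal.ofReal_le_ofReal hk2
      _ = ∑' k : ℕ, ENNReal.ofReal (a k) * (P + N) (ball x (2 ^ (k + 2) * d)) := by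
          rw [lintegral_tsum]
          · congr 1; ext k
            rw [lintegral_indicator_const measurableSet_ball]
          · intro k
            exact (measurable_const.indicator measurableSet_ball).aemeasurable
      _ ≤ ∑' k : ℕ, ENNReal.ofReal (C / b ^ n * 4 ^ n * M * q ^ k) := by
          apply ENNReal.tsum_le_tsum
          intro k
          have h1 := hM (2 ^ (k + 2) * d) (by positivity)
          rw [htv] at h1
          have h2 : (P + N) (ball x (2 ^ (k + 2) * d))
              ≤ ENNReal.ofReal (M * (2 ^ (k + 2) * d) ^ n) :=
            (ENNReal.le_ofReal_iff_toReal_le (measure_ne_top _ _) (by positivity)).2 h1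
          refine (mul_le_mul_right h2 _).trans ?_
          rw [← ENNReal.ofReal_mul (ha0 k)]
          apply le_of_eq
          congr 1
          simp only [ha]
          rw [pow_add, mul_pow, mul_pow]
          norm_num
          field_simp
      _ = ENNReal.ofReal (A * M) := by
          rw [← ENNReal.ofReal_tsum_of_nonneg (fun k => by positivity)
            ((summable_geometric_of_lt_one hq0.le hq1).mul_left _), tsum_mul_left,
            tsum_geometric_of_lt_one hq0.le hq1]
          congr 1
          rw [hAdef]; ring
  have h3 : |Teps K ν (b * d) y| ≤ T + A * M := by
    have : Teps K ν (b * d) y = Teps K ν (2 * d) x + (∫ z, g z ∂P - ∫ z, g z ∂N) := by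
      rw [← hdiff]; ring
    rw [this]
    exact (abs_add_le _ _).trans (add_le_add hTx (habs.trans hmain))
  have : 0 ≤ A * T := by positivity
  linarith
end
end

section
/- Let n ≥ 1 and let E ⊂ ℝ^{n+1} be a closed set that is n-AD-regular: there is c ≥ 1 such that c^{−1} r^n ≤ H^n(E ∩ B(x,r)) ≤ c r^n for all x ∈ E and 0 < r ≤ diam E. Suppose that E has an approximate tangent n-plane at x ∈ E with unit normal u, i.e., for every a ∈ (0,1), lim_{r→0} r^{−n} H^n(E ∩ (X_a(x,u) ∪ X_a(x,−u)) ∩ B(x,r)) = 0. Then this plane is a classical tangent n-plane at x: for every a ∈ (0,1) there exists r₀ > 0 such that E ∩ (X_a(x,u) ∪ X_a(x,−u)) ∩ B(x,r) = ∅ for all 0 < r ≤ r₀. -/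
open MeasureTheory Metric Filter Set
open scoped ENNReal NNReal Topology RealInnerProductSpace

noncomputable section

/-- `E ⊆ ℝ^{n+1}` is `n`-rectifiable: up to an `H^n`-null set it is covered by countably
many Lipschitz images of `ℝ^n`. -/
def Rectifiable (n : ℕ) (E : Set (EuclideanSpace ℝ (Fin (n + 1)))) : Prop :=
  ∃ f : ℕ → EuclideanSpace ℝ (Fin n) → EuclideanSpace ℝ (Fin (n + 1)),
    (∀ k, ∃ L : NNReal, LipschitzWith L (f k)) ∧
    μH[n] (E \ ⋃ k, Set.range (f k)) = 0

/-- `E` has an approximate tangent `n`-plane at `x` with unit normal `u`. -/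
def HasApproxTangentNormal (n : ℕ) (E : Set (EuclideanSpace ℝ (Fin (n + 1))))
    (x u : EuclideanSpace ℝ (Fin (n + 1))) : Prop :=
  ‖u‖ = 1 ∧ ∀ a ∈ Set.Ioo (0 : ℝ) 1,
    Tendsto (fun r : ℝ =>
        μH[n] (E ∩ (cone a x u ∪ cone a x (-u)) ∩ ball x r) / ENNReal.ofReal (r ^ n))
      (𝓝[>] 0) (𝓝 0)

theorem ball_subset_cone_aux {n : ℕ} (a : ℝ) (ha0 : 0 < a) (ha1 : a < 1)
    (x v y : EuclideanSpace ℝ (Fin (n + 1))) (hv : ‖v‖ = 1) (hy : y ∈ cone a x v) :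
    ball y (a / 4 * ‖y - x‖) ⊆ cone (a / 2) x v ∩ ball x (2 * ‖y - x‖) := by
  intro z hz
  have hz' : ‖z - y‖ < a / 4 * ‖y - x‖ := by simpa [mem_ball, dist_eq_norm] using hz
  have hs : 0 ≤ ‖y - x‖ := norm_nonneg _
  have e : z - x = (z - y) + (y - x) := by abel
  have htri : ‖z - x‖ ≤ ‖z - y‖ + ‖y - x‖ := by rw [e]; exact norm_add_le _ _
  have hy' : a * ‖y - x‖ < ⟪y - x, v⟫ := hy
  have hin : -‖z - y‖ ≤ ⟪z - y, v⟫ := by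
    have h := abs_real_inner_le_norm (z - y) v
    rw [hv, mul_one] at h
    exact (abs_le.1 h).1
  constructor
  · change a / 2 * ‖z - x‖ < ⟪z - x, v⟫
    have h2 : ⟪z - x, v⟫ = ⟪z - y, v⟫ + ⟪y - x, v⟫ := by rw [e, inner_add_left]
    rw [h2]
    have h3 : a / 2 * ‖z - x‖ ≤ a / 2 * (a / 4 * ‖y - x‖ + ‖y - x‖) := by
      gcongr
      linarith
    nlinarith [mul_nonneg ha0.le hs, mul_nonneg (mul_nonneg ha0.le hs) (sub_nonneg.2 ha1.le)]
  · rw [mem_ball, dist_eq_norm]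
    nlinarith

theorem approx_tangent_is_classical_on_AD_regular
    (n : ℕ) (hn : 1 ≤ n)
    (E : Set (EuclideanSpace ℝ (Fin (n + 1)))) (hEc : IsClosed E)
    (c : ℝ) (hc : 1 ≤ c)
    (hAD : ∀ x ∈ E, ∀ r : ℝ, 0 < r → ENNReal.ofReal r ≤ EMetric.diam E →
      ENNReal.ofReal (c⁻¹ * r ^ n) ≤ μH[n] (E ∩ ball x r) ∧
        μH[n] (E ∩ ball x r) ≤ ENNReal.ofReal (c * r ^ n))
    (x : EuclideanSpace ℝ (Fin (n + 1))) (hx : x ∈ E)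
    (u : EuclideanSpace ℝ (Fin (n + 1)))
    (hu : HasApproxTangentNormal n E x u) :
    ∀ a ∈ Set.Ioo (0 : ℝ) 1, ∃ r₀ > 0, ∀ r : ℝ, 0 < r → r ≤ r₀ →
      E ∩ (cone a x u ∪ cone a x (-u)) ∩ ball x r = ∅ := by
  intro a ⟨ha0, ha1⟩
  obtain ⟨hu1, hlim⟩ := hu
  have hl := hlim (a / 2) ⟨by linarith, by linarith⟩
  have hc0 : 0 < c := by linarith
  have hpos : (0 : ℝ≥0∞) < ENNReal.ofReal (c⁻¹ * (a / 8) ^ n) := by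
    rw [ENNReal.ofReal_pos]; positivity
  have hev := hl.eventually (gt_mem_nhds hpos)
  rw [eventually_nhdsWithin_iff, Metric.eventually_nhds_iff] at hev
  obtain ⟨δ, hδ, hev⟩ := hev
  refine ⟨δ / 2, by linarith, fun r hr hrδ => ?_⟩
  rw [Set.eq_empty_iff_forall_notMem]
  rintro y ⟨⟨hyE, hyc⟩, hyb⟩
  set s := ‖y - x‖ with hsdef
  have hsr : s < r := by simpa [mem_ball, dist_eq_norm] using hyb
  have hs : 0 < s := by
    refine lt_of_le_of_ne (norm_nonneg _) (fun h => ?_)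
    have h0 : y - x = 0 := norm_eq_zero.1 h.symm
    rcases hyc with h1 | h1 <;> simp [cone, h0] at h1
  have hsub : ball y (a / 4 * s) ⊆ (cone (a / 2) x u ∪ cone (a / 2) x (-u)) ∩ ball x (2 * s) := by
    rcases hyc with h1 | h1
    · exact fun z hz =>
        have h := ball_subset_cone_aux a ha0 ha1 x u y hu1 h1 hz
        ⟨Or.inl h.1, h.2⟩
    · exact fun z hz =>
        have h := ball_subset_cone_aux a ha0 ha1 x (-u) y (by rwa [norm_neg]) h1 hz
        ⟨Or.inr h.1, h.2⟩
  have hdiam : ENNReal.ofReal (a / 4 * s) ≤ EMetric.diam E := by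
    refine le_trans (ENNReal.ofReal_le_ofReal (?_ : _ ≤ dist y x)) ?_
    · rw [dist_eq_norm]; nlinarith
    · rw [← edist_dist]; exact Metric.edist_le_ediam_of_mem hyE hx
  have hlow := (hAD y hyE (a / 4 * s) (by positivity) hdiam).1
  have hmono : μH[n] (E ∩ ball y (a / 4 * s)) ≤
      μH[n] (E ∩ (cone (a / 2) x u ∪ cone (a / 2) x (-u)) ∩ ball x (2 * s)) :=
    measure_mono fun z hz => ⟨⟨hz.1, (hsub hz.2).1⟩, (hsub hz.2).2⟩
  have hlt := hev (y := 2 * s) (by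
    rw [Real.dist_eq, sub_zero, abs_of_pos (by positivity)]; linarith) (by
    change 0 < 2 * s; positivity)
  have hp : 0 < (2 * s) ^ n := by positivity
  rw [ENNReal.div_lt_iff (Or.inl (ENNReal.ofReal_pos.2 hp).ne') (Or.inl ENNReal.ofReal_ne_top),
    ← ENNReal.ofReal_mul (by positivity)] at hlt
  have he : c⁻¹ * (a / 8) ^ n * (2 * s) ^ n = c⁻¹ * (a / 4 * s) ^ n := by
    rw [mul_assoc, ← mul_pow]; congr 2; ring
  rw [he] at hlt
  exact absurd (hlow.trans hmono) (not_le.2 hlt)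
end
end
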